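/- arXiv:1508.04836 — 2 statements merged into one kernel-verified Lean document; each statement's English description precedes it below -/
import Mathlib

section
/- Let (Ω_n, P_n, π_n) be a sequence of finite irreducible reversible Markov chains. If the sequence exhibits a continuous-time cutoff with a cutoff window w_n, then it also exhibits an averaged cutoff with the same cutoff window w_n. -/
open Matrix Filter Asymptotics

/-- `P` is a stochastic matrix. -/
def IsStochastic {Ω : Type*} [Fintype Ω] (P : Matrix Ω Ω ℝ) : Prop :=
  (∀ x y, 0 ≤ P x y) ∧ ∀ x, ∑ y, P x y = 1

/-- `P` is irreducible. -/
def IsIrreducibleMatrix {Ω : Type*} [Fintype Ω] [DecidableEq Ω] (P : Matrix Ω Ω ℝ) : Prop :=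
  ∀ x y, ∃ n : ℕ, 0 < (P ^ n) x y

/-- `μ` is a probability vector. -/
def IsProbVec {Ω : Type*} [Fintype Ω] (μ : Ω → ℝ) : Prop :=
  (∀ x, 0 ≤ μ x) ∧ ∑ x, μ x = 1

/-- The chain `(P, pi)` is reversible. -/
def IsReversible {Ω : Type*} [Fintype Ω] (P : Matrix Ω Ω ℝ) (pi : Ω → ℝ) : Prop :=
  ∀ x y, pi x * P x y = pi y * P y x

/-- A finite irreducible Markov chain `P` with stationary distribution `pi`. -/
def IsMC {Ω : Type*} [Fintype Ω] [DecidableEq Ω] (P : Matrix Ω Ω ℝ) (pi : Ω → ℝ) : Prop :=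
  IsStochastic P ∧ IsIrreducibleMatrix P ∧ IsProbVec pi ∧ pi ᵥ* P = pi

/-- A finite irreducible reversible Markov chain `P` with stationary distribution `pi`. -/
def IsRevMC {Ω : Type*} [Fintype Ω] [DecidableEq Ω] (P : Matrix Ω Ω ℝ) (pi : Ω → ℝ) : Prop :=
  IsMC P pi ∧ IsReversible P pi

/-- Total-variation distance between two measures on a finite set. -/
noncomputable def tvDist {Ω : Type*} [Fintype Ω] (μ ν : Ω → ℝ) : ℝ :=
  (∑ x, |μ x - ν x|) / 2

/-- The lazy version `(I + P)/2` of `P`. -/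
noncomputable def lazyM {Ω : Type*} [Fintype Ω] [DecidableEq Ω] (P : Matrix Ω Ω ℝ) :
    Matrix Ω Ω ℝ :=
  (2 : ℝ)⁻¹ • (1 + P)

/-- `d_c(t, μ)`: TV distance from stationarity of the continuous-time chain at time `t`,
started from `μ`. -/
noncomputable def contDist {Ω : Type*} [Fintype Ω] [DecidableEq Ω] (P : Matrix Ω Ω ℝ) (pi : Ω → ℝ)
    (t : ℝ) (μ : Ω → ℝ) : ℝ :=
  tvDist (fun y => ∑' k : ℕ, Real.exp (-t) * t ^ k / (Nat.factorial k) * (μ ᵥ* (P ^ k)) y) pi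

/-- `d_L(t, μ)`: TV distance from stationarity of the lazy chain at (discrete) time `t`,
started from `μ`. -/
noncomputable def lazyDist {Ω : Type*} [Fintype Ω] [DecidableEq Ω] (P : Matrix Ω Ω ℝ)
    (pi : Ω → ℝ) (t : ℝ) (μ : Ω → ℝ) : ℝ :=
  tvDist (μ ᵥ* (lazyM P ^ ⌊t⌋₊)) pi

/-- `d_ave(t, μ)`: TV distance from stationarity of the averaged chain at (discrete) time `t`,
started from `μ`. -/
noncomputable def aveDist {Ω : Type*} [Fintype Ω] [DecidableEq Ω] (P : Matrix Ω Ω ℝ) (pi : Ω → ℝ)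
    (t : ℝ) (μ : Ω → ℝ) : ℝ :=
  tvDist (fun y => ((μ ᵥ* (P ^ ⌊t⌋₊)) y + (μ ᵥ* (P ^ (⌊t⌋₊ + 1))) y) / 2) pi

/-- The point mass at `x`. -/
noncomputable def deltaMass {Ω : Type*} [DecidableEq Ω] (x : Ω) : Ω → ℝ :=
  fun y => if y = x then 1 else 0

/-- Worst-case continuous-time distance `d_c(t)`. -/
noncomputable def contDistMax {Ω : Type*} [Fintype Ω] [DecidableEq Ω] (P : Matrix Ω Ω ℝ)
    (pi : Ω → ℝ) (t : ℝ) : ℝ :=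
  ⨆ x : Ω, contDist P pi t (deltaMass x)

/-- Worst-case lazy distance `d_L(t)`. -/
noncomputable def lazyDistMax {Ω : Type*} [Fintype Ω] [DecidableEq Ω] (P : Matrix Ω Ω ℝ)
    (pi : Ω → ℝ) (t : ℝ) : ℝ :=
  ⨆ x : Ω, lazyDist P pi t (deltaMass x)

/-- Worst-case averaged distance `d_ave(t)`. -/
noncomputable def aveDistMax {Ω : Type*} [Fintype Ω] [DecidableEq Ω] (P : Matrix Ω Ω ℝ)
    (pi : Ω → ℝ) (t : ℝ) : ℝ :=
  ⨆ x : Ω, aveDist P pi t (deltaMass x)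

/-- `φ_{α,C}(t) = t + ⌈C t^{(1+2α)/2} √(α log t)⌉`. -/
noncomputable def phiAC (α C t : ℝ) : ℝ :=
  t + ((⌈C * t ^ ((1 + 2 * α) / 2) * Real.sqrt (α * Real.log t)⌉ : ℤ) : ℝ)

/-- `ψ_{α,C}(x) = min (1, x + C |log(2x)|^{-α})`. -/
noncomputable def psiAC (α C x : ℝ) : ℝ :=
  min 1 (x + C * |Real.log (2 * x)| ^ (-α))

/-- `t_c(ε)`, the `ε`-mixing time of the continuous-time chain. -/
noncomputable def contMix {Ω : Type*} [Fintype Ω] [DecidableEq Ω] (P : Matrix Ω Ω ℝ)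
    (pi : Ω → ℝ) (ε : ℝ) : ℝ :=
  sInf {t : ℝ | 0 ≤ t ∧ contDistMax P pi t ≤ ε}

/-- `t_L(ε)`, the `ε`-mixing time of the lazy chain. -/
noncomputable def lazyMix {Ω : Type*} [Fintype Ω] [DecidableEq Ω] (P : Matrix Ω Ω ℝ)
    (pi : Ω → ℝ) (ε : ℝ) : ℕ :=
  sInf {t : ℕ | lazyDistMax P pi t ≤ ε}

/-- `t_ave(ε)`, the `ε`-mixing time of the averaged chain. -/
noncomputable def aveMix {Ω : Type*} [Fintype Ω] [DecidableEq Ω] (P : Matrix Ω Ω ℝ)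
    (pi : Ω → ℝ) (ε : ℝ) : ℕ :=
  sInf {t : ℕ | aveDistMax P pi t ≤ ε}

/-- The sequence of continuous-time chains exhibits cutoff. -/
def ContCutoff {Ω : ℕ → Type} [∀ n, Fintype (Ω n)] [∀ n, DecidableEq (Ω n)]
    (P : ∀ n, Matrix (Ω n) (Ω n) ℝ) (pi : ∀ n, Ω n → ℝ) : Prop :=
  ∀ ε : ℝ, 0 < ε → ε < 1 →
    Tendsto (fun n => contMix (P n) (pi n) ε / contMix (P n) (pi n) (1 - ε)) atTop (nhds 1)

/-- The sequence of lazy chains exhibits cutoff. -/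
def LazyCutoff {Ω : ℕ → Type} [∀ n, Fintype (Ω n)] [∀ n, DecidableEq (Ω n)]
    (P : ∀ n, Matrix (Ω n) (Ω n) ℝ) (pi : ∀ n, Ω n → ℝ) : Prop :=
  ∀ ε : ℝ, 0 < ε → ε < 1 →
    Tendsto (fun n => (lazyMix (P n) (pi n) ε : ℝ) / (lazyMix (P n) (pi n) (1 - ε) : ℝ))
      atTop (nhds 1)

/-- The sequence of averaged chains exhibits cutoff. -/
def AveCutoff {Ω : ℕ → Type} [∀ n, Fintype (Ω n)] [∀ n, DecidableEq (Ω n)]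
    (P : ∀ n, Matrix (Ω n) (Ω n) ℝ) (pi : ∀ n, Ω n → ℝ) : Prop :=
  ∀ ε : ℝ, 0 < ε → ε < 1 →
    Tendsto (fun n => (aveMix (P n) (pi n) ε : ℝ) / (aveMix (P n) (pi n) (1 - ε) : ℝ))
      atTop (nhds 1)

/-- The sequence of continuous-time chains exhibits cutoff with window `w`. -/
def ContCutoffWindow {Ω : ℕ → Type} [∀ n, Fintype (Ω n)] [∀ n, DecidableEq (Ω n)]
    (P : ∀ n, Matrix (Ω n) (Ω n) ℝ) (pi : ∀ n, Ω n → ℝ) (w : ℕ → ℝ) : Prop :=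
  ContCutoff P pi ∧
  (fun n => w n) =o[atTop] (fun n => contMix (P n) (pi n) (1 / 4)) ∧
  ∀ ε : ℝ, 0 < ε → ε ≤ 1 / 4 → ∃ Cε : ℝ, 0 < Cε ∧
    ∀ n, contMix (P n) (pi n) ε - contMix (P n) (pi n) (1 - ε) ≤ Cε * w n

/-- The sequence of averaged chains exhibits cutoff with window `w`. -/
def AveCutoffWindow {Ω : ℕ → Type} [∀ n, Fintype (Ω n)] [∀ n, DecidableEq (Ω n)]
    (P : ∀ n, Matrix (Ω n) (Ω n) ℝ) (pi : ∀ n, Ω n → ℝ) (w : ℕ → ℝ) : Prop :=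
  AveCutoff P pi ∧
  (fun n => w n) =o[atTop] (fun n => (aveMix (P n) (pi n) (1 / 4) : ℝ)) ∧
  ∀ ε : ℝ, 0 < ε → ε ≤ 1 / 4 → ∃ Cε : ℝ, 0 < Cε ∧
    ∀ n, (aveMix (P n) (pi n) ε : ℝ) - (aveMix (P n) (pi n) (1 - ε) : ℝ) ≤ Cε * w n

/-!
All distances are operator norms on `ℓ^∞`: writing `Π` for the matrix with every row equal to `pi`,
the continuous distance is `‖H_t - Π‖ / 2` and the averaged one is `‖A_m - Π‖ / 2`.

Since `H_t` is a Poisson mixture of the powers of `P`, and the Poisson law of mean `t` has variance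
`t`, continuous mixing follows averaged mixing up to a delay of order `√t`. For the converse,
reversibility gives `‖P ^ m f - P ^ (m + 2) f‖ = O(1 / m)` in `L²(pi)`. Hence on average over `pi`
the sequence `A_m f` hardly oscillates on a time window of length `r` after a burn-in `s ≫ r`, and
when `r ≫ √t` this makes `A_{t + r + s} f` close to `H_t A_s f`. So the two mixing times differ by
`O(√t + 1)`.

This error is absorbed in any continuous-time cutoff window, because moving the distance from `3/4`
to `1/4` already takes time of order `√t + 1`: the Poisson laws of means `a` and `b` have
chi-square distance `exp ((b - a) ^ 2 / a) - 1`, and `H_t` is Lipschitz in `t`. One-point chains,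
for which every mixing time vanishes, are treated apart.
-/

section CauchySchwarz

variable {ι : Type*} {p g : ι → ℝ} {v : ℝ}

theorem tsum_mul_abs_le_sqrt (hp : ∀ i, 0 ≤ p i) (hp1 : HasSum p 1)
    (hg : HasSum (fun i => p i * g i ^ 2) v) : ∑' i, p i * |g i| ≤ √v := by
  have hp_sq : ∀ i, √(p i) ^ (2 : ℝ) = p i := fun i => by
    rw [Real.rpow_two, Real.sq_sqrt (hp i)]
  have hg_sq : ∀ i, (√(p i) * |g i|) ^ (2 : ℝ) = p i * g i ^ 2 := fun i => by
    rw [Real.rpow_two, mul_pow, Real.sq_sqrt (hp i), sq_abs]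
  have holder := Real.inner_le_Lp_mul_Lq_tsum_of_nonneg (f := fun i => √(p i))
    (g := fun i => √(p i) * |g i|) Real.HolderConjugate.two_two
    (fun i => by positivity) (fun i => by positivity)
    (by simpa only [hp_sq] using hp1.summable) (by simpa only [hg_sq] using hg.summable)
  simpa only [hp_sq, hg_sq, hp1.tsum_eq, hg.tsum_eq, ← Real.sqrt_eq_rpow,
    Real.sqrt_one, one_mul, ← mul_assoc, Real.mul_self_sqrt (hp _)] using holder

theorem norm_le_sqrt_of_hasSum_smul {E : Type*} [SeminormedAddCommGroup E] [NormedSpace ℝ E]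
    {A : ι → E} {S : E} (hp : ∀ i, 0 ≤ p i) (hp1 : HasSum p 1)
    (hg : HasSum (fun i => p i * g i ^ 2) v) (hA : ∀ i, ‖A i‖ ≤ 1)
    (hS : HasSum (fun i => (p i * g i) • A i) S) : ‖S‖ ≤ √v := by
  have hsum : Summable fun i => p i * |g i| :=
    (hp1.summable.add hg.summable).of_nonneg_of_le (fun i => by have := hp i; positivity)
      fun i => by
        have : |g i| ≤ 1 + g i ^ 2 := by nlinarith [sq_abs (g i), sq_nonneg (|g i| - 1)]
        nlinarith [mul_le_mul_of_nonneg_left this (hp i)]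
  refine (hS.norm_le_of_bounded hsum.hasSum fun i => ?_).trans (tsum_mul_abs_le_sqrt hp hp1 hg)
  rw [norm_smul, Real.norm_eq_abs, abs_mul, abs_of_nonneg (hp i)]
  exact mul_le_of_le_one_right (by have := hp i; positivity) (hA i)

end CauchySchwarz

section Poisson

/-- The weight `e^{-t} t^k / k!` which the Poisson distribution of mean `t` gives to `k`. Here `t`
is an arbitrary real number, so that the algebraic identities hold unconditionally. -/
noncomputable def poissonWeight (t : ℝ) (k : ℕ) : ℝ :=
  Real.exp (-t) * t ^ k / k.factorial

theorem poissonWeight_nonneg {t : ℝ} (ht : 0 ≤ t) (k : ℕ) : 0 ≤ poissonWeight t k := by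
  unfold poissonWeight
  positivity

theorem hasSum_poissonWeight (t : ℝ) : HasSum (poissonWeight t) 1 := by
  have h := (NormedSpace.expSeries_div_hasSum_exp t).mul_left (Real.exp (-t))
  rw [← Real.exp_eq_exp_ℝ, ← Real.exp_add, neg_add_cancel, Real.exp_zero] at h
  exact h.congr_fun fun k => mul_div_assoc _ _ _

theorem succ_mul_poissonWeight_succ (t : ℝ) (k : ℕ) :
    ((k + 1 : ℕ) : ℝ) * poissonWeight t (k + 1) = t * poissonWeight t k := by
  simp only [poissonWeight, Nat.factorial_succ, Nat.cast_mul, pow_succ]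
  field_simp

theorem hasSum_natCast_mul_poissonWeight_smul {E : Type*} [AddCommGroup E] [Module ℝ E]
    [TopologicalSpace E] [IsTopologicalAddGroup E] [ContinuousConstSMul ℝ E] {t : ℝ} {f : ℕ → E}
    {a : E} (h : HasSum (fun k => poissonWeight t k • f (k + 1)) a) :
    HasSum (fun k : ℕ => (k * poissonWeight t k) • f k) (t • a) := by
  rw [← hasSum_nat_add_iff' 1]
  simpa only [succ_mul_poissonWeight_succ, mul_smul, Finset.sum_range_one, Nat.cast_zero,
    zero_smul, zero_mul, sub_zero] using h.const_smul t

theorem hasSum_natCast_mul_poissonWeight (t : ℝ) :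
    HasSum (fun k : ℕ => k * poissonWeight t k) t := by
  have h := hasSum_natCast_mul_poissonWeight_smul (f := fun _ => (1 : ℝ))
    ((hasSum_poissonWeight t).congr_fun fun k => mul_one _)
  rw [smul_eq_mul, mul_one] at h
  exact h.congr_fun fun k => (mul_one _).symm

theorem hasSum_poissonWeight_mul_sub_sq (t : ℝ) :
    HasSum (fun k : ℕ => poissonWeight t k * (k - t) ^ 2) t := by
  have mean := hasSum_natCast_mul_poissonWeight t
  have second_moment : HasSum (fun k : ℕ => (k * poissonWeight t k) • (k : ℝ)) (t • (t + 1)) :=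
    hasSum_natCast_mul_poissonWeight_smul <| (mean.add (hasSum_poissonWeight t)).congr_fun
      fun k => by push_cast [smul_eq_mul]; ring
  have h := (second_moment.sub (mean.mul_left (2 * t))).add
    ((hasSum_poissonWeight t).mul_left (t ^ 2))
  rw [show t • (t + 1) - 2 * t * t + t ^ 2 * 1 = t by rw [smul_eq_mul]; ring] at h
  exact h.congr_fun fun k => by rw [smul_eq_mul]; ring

theorem hasSum_poissonWeight_mul_one_sub_div_sq {t : ℝ} (ht : t ≠ 0) :
    HasSum (fun k : ℕ => poissonWeight t k * (1 - k / t) ^ 2) (1 / t) := by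
  have h := (hasSum_poissonWeight_mul_sub_sq t).div_const (t ^ 2)
  rw [show t / t ^ 2 = 1 / t by field_simp] at h
  exact h.congr_fun fun k => by field_simp; ring

theorem poissonWeight_mul_ratio {a : ℝ} (ha : a ≠ 0) (b : ℝ) (k : ℕ) :
    poissonWeight a k * (Real.exp (a - b) * (b / a) ^ k) = poissonWeight b k := by
  have hexp : Real.exp (-b) = Real.exp (-a) * Real.exp (a - b) := by
    rw [← Real.exp_add]
    ring_nf
  simp only [poissonWeight, hexp, div_pow]
  field_simp

theorem hasSum_poissonWeight_mul_ratio_sq {a : ℝ} (ha : a ≠ 0) (b : ℝ) :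
    HasSum (fun k => poissonWeight a k * (Real.exp (a - b) * (b / a) ^ k) ^ 2)
      (Real.exp ((b - a) ^ 2 / a)) := by
  have h := (hasSum_poissonWeight (b ^ 2 / a)).mul_left (Real.exp ((b - a) ^ 2 / a))
  rw [mul_one] at h
  refine h.congr_fun fun k => ?_
  have hexp : Real.exp (a - b) ^ 2 = Real.exp ((b - a) ^ 2 / a) * Real.exp (a - b ^ 2 / a) := by
    rw [← Real.exp_nat_mul, ← Real.exp_add]
    congr 1
    field_simp
    ring
  have hpow : ((b / a) ^ k) ^ 2 = (b ^ 2 / a / a) ^ k := by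
    rw [pow_right_comm, div_pow, div_div, sq a]
  rw [← poissonWeight_mul_ratio ha (b ^ 2 / a) k, mul_pow, hexp, hpow]
  ring

theorem hasSum_poissonWeight_mul_one_sub_ratio_sq {a : ℝ} (ha : a ≠ 0) (b : ℝ) :
    HasSum (fun k => poissonWeight a k * (1 - Real.exp (a - b) * (b / a) ^ k) ^ 2)
      (Real.exp ((b - a) ^ 2 / a) - 1) := by
  have h := ((hasSum_poissonWeight a).sub ((hasSum_poissonWeight b).mul_left 2)).add
    (hasSum_poissonWeight_mul_ratio_sq ha b)
  rw [show ∀ e : ℝ, 1 - 2 * 1 + e = e - 1 by intro e; ring] at h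
  refine h.congr_fun fun k => ?_
  rw [← poissonWeight_mul_ratio ha b k]
  ring

theorem norm_le_of_hasSum_poissonWeight_smul {E : Type*} [SeminormedAddCommGroup E]
    [NormedSpace ℝ E] {t r M C : ℝ} {v : ℕ → E} {V : E} {c : ℕ → ℝ} (ht : 0 ≤ t) (hr : 0 < r)
    (hM : ∀ k, ‖v k‖ ≤ M) (hc : ∀ k, 0 ≤ c k) (hvc : ∀ k : ℕ, |k - t| < r → ‖v k‖ ≤ c k)
    (hV : HasSum (fun k => poissonWeight t k • v k) V)
    (hC : HasSum (fun k => poissonWeight t k * c k) C) : ‖V‖ ≤ C + M * (t / r ^ 2) := by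
  have hM0 : 0 ≤ M := (norm_nonneg _).trans (hM 0)
  have chebyshev : ∀ k : ℕ, ‖v k‖ ≤ c k + M * ((k - t) ^ 2 / r ^ 2) := fun k => by
    rcases lt_or_ge |k - t| r with hk | hk
    · exact (hvc k hk).trans (le_add_of_nonneg_right (by positivity))
    · have : 1 ≤ (k - t) ^ 2 / r ^ 2 := by
        rw [one_le_div (by positivity), ← sq_abs (k - t)]
        gcongr
      exact (hM k).trans <| (le_mul_of_one_le_right hM0 this).trans
        (le_add_of_nonneg_left (hc k))
  refine hV.norm_le_of_bounded
    (hC.add (((hasSum_poissonWeight_mul_sub_sq t).div_const (r ^ 2)).mul_left M)) fun k => ?_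
  have hp := poissonWeight_nonneg ht k
  rw [norm_smul, Real.norm_of_nonneg hp]
  exact (mul_le_mul_of_nonneg_left (chebyshev k) hp).trans_eq (by ring)

end Poisson

section HeatKernel

variable {A : Type*} [NormedRing A] [NormedAlgebra ℝ A] [CompleteSpace A] {P : A} {t a b : ℝ}

/-- The operator `e^{t (P - 1)}`; for a transition matrix `P` this is the transition matrix `H_t` at
time `t` of the continuous-time chain which jumps according to `P` at rate one. -/
noncomputable def heatKernel (P : A) (t : ℝ) : A :=
  NormedSpace.exp (t • (P - 1))

theorem hasSum_heatKernel (P : A) (t : ℝ) :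
    HasSum (fun k => poissonWeight t k • P ^ k) (heatKernel P t) := by
  let _ := NormedAlgebra.restrictScalars ℚ ℝ A
  have hexp : heatKernel P t = Real.exp (-t) • NormedSpace.exp (t • P) := by
    have hcomm : Commute (algebraMap ℝ A (-t)) (t • P) := Algebra.commute_algebraMap_left _ _
    rw [heatKernel, smul_sub, sub_eq_neg_add, ← neg_smul, ← Algebra.algebraMap_eq_smul_one,
      NormedSpace.exp_add_of_commute hcomm, ← NormedSpace.algebraMap_exp_comm,
      ← Real.exp_eq_exp_ℝ, ← Algebra.smul_def]
  rw [hexp]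
  refine ((NormedSpace.exp_series_hasSum_exp' (𝕂 := ℝ) (t • P)).const_smul _).congr_fun fun k => ?_
  rw [smul_pow, smul_smul, smul_smul, poissonWeight]
  ring_nf

theorem continuous_heatKernel (P : A) : Continuous (heatKernel P) := by
  let _ := NormedAlgebra.restrictScalars ℚ ℝ A
  exact NormedSpace.exp_continuous.comp (continuous_id.smul continuous_const)

theorem heatKernel_add (P : A) (a b : ℝ) :
    heatKernel P (a + b) = heatKernel P a * heatKernel P b := by
  let _ := NormedAlgebra.restrictScalars ℚ ℝ A
  rw [heatKernel, add_smul, NormedSpace.exp_add_of_commute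
    (((Commute.refl (P - 1)).smul_left a).smul_right b), heatKernel, heatKernel]

theorem heatKernel_natCast (P : A) (n : ℕ) : heatKernel P n = heatKernel P 1 ^ n := by
  let _ := NormedAlgebra.restrictScalars ℚ ℝ A
  rw [heatKernel, heatKernel, ← NormedSpace.exp_nsmul, one_smul, Nat.cast_smul_eq_nsmul]

@[simp]
theorem heatKernel_zero (P : A) : heatKernel P 0 = 1 := by
  simpa using heatKernel_natCast P 0

theorem mul_pow_of_mul_eq {M : Type*} [Monoid M] {p q : M} (h : q * p = q) (n : ℕ) :
    q * p ^ n = q := by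
  induction n with
  | zero => rw [pow_zero, mul_one]
  | succ n ih => rw [pow_succ', ← mul_assoc, h, ih]

theorem mul_heatKernel_of_mul_eq {Q : A} (h : Q * P = Q) (t : ℝ) : Q * heatKernel P t = Q := by
  have h1 := (hasSum_heatKernel P t).mul_left Q
  simp only [mul_smul_comm, mul_pow_of_mul_eq h] at h1
  simpa using h1.unique ((hasSum_poissonWeight t).smul_const Q)

theorem norm_heatKernel_le_one (hP : ∀ k, ‖P ^ k‖ ≤ 1) (ht : 0 ≤ t) : ‖heatKernel P t‖ ≤ 1 :=
  (hasSum_heatKernel P t).norm_le_of_bounded (hasSum_poissonWeight t) fun k => by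
    rw [norm_smul, Real.norm_of_nonneg (poissonWeight_nonneg ht k)]
    exact mul_le_of_le_one_right (poissonWeight_nonneg ht k) (hP k)

theorem norm_one_sub_heatKernel_le (hP : ∀ k, ‖P ^ k‖ ≤ 1) (ht : 0 ≤ t) :
    ‖1 - heatKernel P t‖ ≤ 2 * t := by
  have h1 := ((hasSum_poissonWeight t).smul_const (1 : A)).sub (hasSum_heatKernel P t)
  rw [one_smul] at h1
  refine h1.norm_le_of_bounded ((hasSum_natCast_mul_poissonWeight t).mul_left 2) fun k => ?_
  have hk : ‖1 - P ^ k‖ ≤ 2 * k := by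
    rcases k.eq_zero_or_pos with rfl | hk
    · simp
    · have h0 := norm_sub_le (1 : A) (P ^ k)
      have h1 : ‖(1 : A)‖ ≤ 1 := by simpa only [pow_zero] using hP 0
      have h2 : (1 : ℝ) ≤ k := by exact_mod_cast hk
      linarith [hP k]
  rw [← smul_sub, norm_smul, Real.norm_of_nonneg (poissonWeight_nonneg ht k)]
  exact (mul_le_mul_of_nonneg_left hk (poissonWeight_nonneg ht k)).trans_eq (by ring)

theorem norm_heatKernel_sub_le (hP : ∀ k, ‖P ^ k‖ ≤ 1) (ha : 0 ≤ a) (hab : a ≤ b) :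
    ‖heatKernel P a - heatKernel P b‖ ≤ 2 * (b - a) := by
  have hfactor : heatKernel P a - heatKernel P b =
      heatKernel P a * (1 - heatKernel P (b - a)) := by
    rw [mul_sub, mul_one, ← heatKernel_add, add_sub_cancel]
  calc ‖heatKernel P a - heatKernel P b‖
      ≤ ‖heatKernel P a‖ * ‖1 - heatKernel P (b - a)‖ := hfactor ▸ norm_mul_le _ _
    _ ≤ 1 * (2 * (b - a)) := by
      gcongr
      · exact norm_heatKernel_le_one hP ha
      · exact norm_one_sub_heatKernel_le hP (sub_nonneg.2 hab)
    _ = 2 * (b - a) := one_mul _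

theorem norm_heatKernel_sub_le_sqrt (hP : ∀ k, ‖P ^ k‖ ≤ 1) (ha : 0 < a) (b : ℝ) :
    ‖heatKernel P a - heatKernel P b‖ ≤ √(Real.exp ((b - a) ^ 2 / a) - 1) := by
  refine norm_le_sqrt_of_hasSum_smul (poissonWeight_nonneg ha.le) (hasSum_poissonWeight a)
    (hasSum_poissonWeight_mul_one_sub_ratio_sq ha.ne' b) hP ?_
  refine ((hasSum_heatKernel P a).sub (hasSum_heatKernel P b)).congr_fun fun k => ?_
  rw [mul_sub, mul_one, poissonWeight_mul_ratio ha.ne', sub_smul]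

theorem norm_heatKernel_sub_heatKernel_mul_le (hP : ∀ k, ‖P ^ k‖ ≤ 1) (ht : 0 < t) :
    ‖heatKernel P t - heatKernel P t * P‖ ≤ √(1 / t) := by
  have hshift := hasSum_natCast_mul_poissonWeight_smul (f := (P ^ ·))
    (((hasSum_heatKernel P t).mul_right P).congr_fun fun k => by rw [pow_succ, smul_mul_assoc])
  have h := (hasSum_heatKernel P t).sub (hshift.const_smul t⁻¹)
  rw [inv_smul_smul₀ ht.ne'] at h
  refine norm_le_sqrt_of_hasSum_smul (poissonWeight_nonneg ht.le) (hasSum_poissonWeight t)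
    (hasSum_poissonWeight_mul_one_sub_div_sq ht.ne') hP (h.congr_fun fun k => ?_)
  rw [smul_smul, ← sub_smul]
  ring_nf

end HeatKernel

section OperatorNorm

open scoped Matrix.Norms.Operator

variable {Ω : Type*} [Fintype Ω] {P Q : Matrix Ω Ω ℝ} {pi : Ω → ℝ}

theorem linfty_opNorm_le {m n : Type*} [Fintype m] [Fintype n] {M : Matrix m n ℝ} {c : ℝ}
    (hc : 0 ≤ c) (h : ∀ x, ∑ y, |M x y| ≤ c) : ‖M‖ ≤ c := by
  lift c to NNReal using hc
  rw [linfty_opNorm_def, NNReal.coe_le_coe, Finset.sup_le_iff]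
  intro x _
  rw [← NNReal.coe_le_coe]
  simpa using h x

theorem sum_abs_le_linfty_opNorm {m n : Type*} [Fintype m] [Fintype n] (M : Matrix m n ℝ) (x : m) :
    ∑ y, |M x y| ≤ ‖M‖ := by
  have h := Finset.le_sup (f := fun x => ∑ y, ‖M x y‖₊) (Finset.mem_univ x)
  rw [linfty_opNorm_def]
  simpa using NNReal.coe_le_coe.2 h

theorem iSup_sum_abs_eq_linfty_opNorm {m n : Type*} [Fintype m] [Fintype n] (M : Matrix m n ℝ) :
    ⨆ x, ∑ y, |M x y| = ‖M‖ := by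
  refine le_antisymm (Real.iSup_le (sum_abs_le_linfty_opNorm M) (norm_nonneg M)) ?_
  refine linfty_opNorm_le (Real.iSup_nonneg fun x => by positivity) fun x => ?_
  exact le_ciSup (f := fun x => ∑ y, |M x y|) (Set.finite_range _).bddAbove x

theorem linfty_opNorm_le_of_norm_mulVec_le {m n : Type*} [Fintype m] [Fintype n]
    {M : Matrix m n ℝ} {c : ℝ} (hc : 0 ≤ c) (h : ∀ f, ‖f‖ = 1 → ‖M *ᵥ f‖ ≤ c) : ‖M‖ ≤ c := by
  rw [linfty_opNorm_eq_opNorm]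
  exact ContinuousLinearMap.opNorm_le_of_unit_norm hc h

theorem IsStochastic.norm_le_one (hP : IsStochastic P) : ‖P‖ ≤ 1 :=
  linfty_opNorm_le zero_le_one fun x => by
    simp only [abs_of_nonneg (hP.1 x _), hP.2 x, le_refl]

theorem IsStochastic.mul_replicateRow (hQ : IsStochastic Q) (pi : Ω → ℝ) :
    Q * replicateRow Ω pi = replicateRow Ω pi := by
  ext x y
  simp only [mul_apply, replicateRow_apply, ← Finset.sum_mul, hQ.2 x, one_mul]

theorem replicateRow_mul_of_vecMul_eq (hstat : pi ᵥ* P = pi) :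
    replicateRow Ω pi * P = replicateRow Ω pi := by
  rw [← replicateRow_vecMul, hstat]

theorem IsReversible.vecMul_eq (hrev : IsReversible P pi) (hP : IsStochastic P) :
    pi ᵥ* P = pi := by
  ext y
  simp only [vecMul, dotProduct, hrev _ y, ← Finset.mul_sum, hP.2 y, mul_one]

variable [DecidableEq Ω]

theorem isStochastic_iff_mem_rowStochastic : IsStochastic P ↔ P ∈ rowStochastic ℝ Ω :=
  mem_rowStochastic_iff_sum.symm

theorem IsStochastic.pow (hP : IsStochastic P) (n : ℕ) : IsStochastic (P ^ n) := by
  rw [isStochastic_iff_mem_rowStochastic] at hP ⊢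
  exact pow_mem hP n

theorem IsStochastic.norm_pow_le_one (hP : IsStochastic P) (n : ℕ) : ‖P ^ n‖ ≤ 1 :=
  (hP.pow n).norm_le_one

theorem deltaMass_vecMul_apply (x : Ω) (M : Matrix Ω Ω ℝ) (y : Ω) :
    (deltaMass x ᵥ* M) y = M x y := by
  have h : deltaMass x = Pi.single x 1 := by
    ext y
    simp only [deltaMass, Pi.single_apply]
  rw [h, single_one_vecMul, row_apply]

theorem hasSum_heatKernel_apply (P : Matrix Ω Ω ℝ) (t : ℝ) (x y : Ω) :
    HasSum (fun k => poissonWeight t k * (P ^ k) x y) (heatKernel P t x y) :=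
  Pi.hasSum.1 (Pi.hasSum.1 (hasSum_heatKernel P t) x) y

theorem isStochastic_heatKernel (hP : IsStochastic P) {t : ℝ} (ht : 0 ≤ t) :
    IsStochastic (heatKernel P t) := by
  refine ⟨fun x y => ?_, fun x => ?_⟩
  · exact (hasSum_heatKernel_apply P t x y).nonneg fun k =>
      mul_nonneg (poissonWeight_nonneg ht k) ((hP.pow k).1 x y)
  · refine (hasSum_sum fun y _ => hasSum_heatKernel_apply P t x y).unique ?_
    simpa only [← Finset.mul_sum, (hP.pow _).2 x, mul_one] using hasSum_poissonWeight t

/-- The averaged transition matrix `(P^m + P^(m+1)) / 2`. -/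
noncomputable def aveKernel (P : Matrix Ω Ω ℝ) (m : ℕ) : Matrix Ω Ω ℝ :=
  (2 : ℝ)⁻¹ • (P ^ m + P ^ (m + 1))

theorem pow_mul_aveKernel (P : Matrix Ω Ω ℝ) (k m : ℕ) :
    P ^ k * aveKernel P m = aveKernel P (k + m) := by
  simp only [aveKernel, mul_smul_comm, mul_add, ← pow_add, add_assoc]

theorem IsStochastic.norm_aveKernel_le_one (hP : IsStochastic P) (m : ℕ) :
    ‖aveKernel P m‖ ≤ 1 := by
  have h := norm_add_le (P ^ m) (P ^ (m + 1))
  rw [aveKernel, norm_smul, norm_inv, Real.norm_ofNat]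
  linarith [hP.norm_pow_le_one m, hP.norm_pow_le_one (m + 1)]

theorem contDistMax_eq_norm (P : Matrix Ω Ω ℝ) (pi : Ω → ℝ) (t : ℝ) :
    contDistMax P pi t = ‖heatKernel P t - replicateRow Ω pi‖ / 2 := by
  rw [← iSup_sum_abs_eq_linfty_opNorm, div_eq_mul_inv, Real.iSup_mul_of_nonneg (by norm_num)]
  have htsum : ∀ x y, ∑' k : ℕ, Real.exp (-t) * t ^ k / k.factorial * (P ^ k) x y =
      heatKernel P t x y := fun x y => (hasSum_heatKernel_apply P t x y).tsum_eq
  simp only [contDistMax, contDist, tvDist, deltaMass_vecMul_apply, htsum, ← div_eq_mul_inv]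
  rfl

theorem aveDistMax_natCast_eq_norm (P : Matrix Ω Ω ℝ) (pi : Ω → ℝ) (m : ℕ) :
    aveDistMax P pi m = ‖aveKernel P m - replicateRow Ω pi‖ / 2 := by
  rw [← iSup_sum_abs_eq_linfty_opNorm, div_eq_mul_inv, Real.iSup_mul_of_nonneg (by norm_num)]
  simp only [aveDistMax, aveDist, tvDist, deltaMass_vecMul_apply, Nat.floor_natCast,
    ← div_eq_mul_inv, div_eq_inv_mul (_ + _)]
  rfl

end OperatorNorm

section SelfAdjointContraction

theorem succ_mul_second_difference_le {b : ℕ → ℝ} (hb_nonneg : ∀ n, 0 ≤ b n) (hb : Antitone b)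
    (hc : Antitone fun n => b n - 2 * b (n + 1) + b (n + 2)) (n : ℕ) :
    (n + 1) * (n + 2) * (b n - 2 * b (n + 1) + b (n + 2)) ≤ 2 * b 0 := by
  have summation_by_parts : ∀ m : ℕ,
      ∑ i ∈ Finset.range m, ((i : ℝ) + 1) * (b i - 2 * b (i + 1) + b (i + 2)) =
        b 0 - b m - m * (b m - b (m + 1)) := fun m => by
    induction m with
    | zero => simp
    | succ m ih =>
      rw [Finset.sum_range_succ, ih]
      push_cast
      ring
  have gauss : ∀ m : ℕ, ∑ i ∈ Finset.range m, ((i : ℝ) + 1) = m * (m + 1) / 2 := fun m => by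
    induction m with
    | zero => simp
    | succ m ih =>
      rw [Finset.sum_range_succ, ih]
      push_cast
      ring
  have lower : ∑ i ∈ Finset.range (n + 1), ((i : ℝ) + 1) * (b n - 2 * b (n + 1) + b (n + 2)) ≤
      ∑ i ∈ Finset.range (n + 1), ((i : ℝ) + 1) * (b i - 2 * b (i + 1) + b (i + 2)) :=
    Finset.sum_le_sum fun i hi => mul_le_mul_of_nonneg_left
      (hc (Finset.mem_range_succ_iff.1 hi)) (by positivity)
  rw [← Finset.sum_mul, gauss, summation_by_parts] at lower
  have hdiff : 0 ≤ ((n + 1 : ℕ) : ℝ) * (b (n + 1) - b (n + 1 + 1)) :=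
    mul_nonneg (Nat.cast_nonneg _) (sub_nonneg.2 (hb (Nat.le_succ _)))
  push_cast at lower hdiff
  linarith [hb_nonneg (n + 1)]

variable {E : Type*} [AddCommGroup E] [Module ℝ E] {B : LinearMap.BilinForm ℝ E} {T : E →ₗ[ℝ] E}

theorem bilin_pow_sub_pow_add_two (hself : ∀ u v, B (T u) v = B u (T v)) (f : E) (n : ℕ) :
    B ((T ^ n) f - (T ^ (n + 2)) f) ((T ^ n) f - (T ^ (n + 2)) f) =
      B ((T ^ n) f) ((T ^ n) f) - 2 * B ((T ^ (n + 1)) f) ((T ^ (n + 1)) f) +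
        B ((T ^ (n + 2)) f) ((T ^ (n + 2)) f) := by
  have hsucc : ∀ m, (T ^ (m + 1)) f = T ((T ^ m) f) := fun m => by
    rw [pow_succ', Module.End.mul_apply]
  have hright : B ((T ^ n) f) ((T ^ (n + 2)) f) = B ((T ^ (n + 1)) f) ((T ^ (n + 1)) f) := by
    rw [hsucc (n + 1), ← hself, ← hsucc]
  have hleft : B ((T ^ (n + 2)) f) ((T ^ n) f) = B ((T ^ (n + 1)) f) ((T ^ (n + 1)) f) := by
    rw [hsucc (n + 1), hself, ← hsucc]
  simp only [map_sub, LinearMap.sub_apply, hright, hleft]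
  ring

/- The sequence `n ↦ B (T ^ n f) (T ^ n f)` is antitone with antitone second differences, which for
a Hilbert space is the spectral bound `(λ ^ n - λ ^ (n + 2)) ^ 2 ≤ 2 / ((n + 1) * (n + 2))` on
`|λ| ≤ 1`, obtained here without diagonalising `T`. -/
theorem succ_mul_bilin_pow_sub_pow_add_two_le (hB : ∀ v, 0 ≤ B v v)
    (hself : ∀ u v, B (T u) v = B u (T v)) (hT : ∀ v, B (T v) (T v) ≤ B v v) (f : E) (n : ℕ) :
    (n + 1) * (n + 2) * B ((T ^ n) f - (T ^ (n + 2)) f) ((T ^ n) f - (T ^ (n + 2)) f) ≤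
      2 * B f f := by
  have hsucc : ∀ m, (T ^ (m + 1)) f = T ((T ^ m) f) := fun m => by
    rw [pow_succ', Module.End.mul_apply]
  have hb : Antitone fun m => B ((T ^ m) f) ((T ^ m) f) := antitone_nat_of_succ_le fun m => by
    simpa only [hsucc] using hT _
  rw [bilin_pow_sub_pow_add_two hself]
  refine succ_mul_second_difference_le (fun m => hB _) hb (antitone_nat_of_succ_le fun m => ?_) n
  rw [← bilin_pow_sub_pow_add_two hself f m, ← bilin_pow_sub_pow_add_two hself f (m + 1),
    show m + 1 + 2 = (m + 2) + 1 from rfl, hsucc m, hsucc (m + 2), ← map_sub]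
  exact hT _

end SelfAdjointContraction

section ReversibleDecay

open scoped Matrix.Norms.Operator

variable {Ω : Type*} [Fintype Ω] {P : Matrix Ω Ω ℝ} {pi : Ω → ℝ}

theorem IsStochastic.abs_mulVec_apply_le (hP : IsStochastic P) {f g : Ω → ℝ}
    (hfg : ∀ y, |f y| ≤ g y) (x : Ω) : |(P *ᵥ f) x| ≤ (P *ᵥ g) x :=
  (Finset.abs_sum_le_sum_abs _ _).trans <| Finset.sum_le_sum fun y _ => by
    rw [abs_mul, abs_of_nonneg (hP.1 x y)]
    exact mul_le_mul_of_nonneg_left (hfg y) (hP.1 x y)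

theorem IsStochastic.mulVec_sq_le (hP : IsStochastic P) (f : Ω → ℝ) (x : Ω) :
    (P *ᵥ f) x ^ 2 ≤ (P *ᵥ (f ^ 2)) x :=
  Real.pow_arith_mean_le_arith_mean_pow_of_even _ _ f (fun y _ => hP.1 x y) (hP.2 x) even_two

theorem sum_mul_mulVec_sq_le (hP : IsStochastic P) (hpi : ∀ x, 0 ≤ pi x) (hstat : pi ᵥ* P = pi)
    (f : Ω → ℝ) : ∑ x, pi x * (P *ᵥ f) x ^ 2 ≤ ∑ x, pi x * f x ^ 2 :=
  calc ∑ x, pi x * (P *ᵥ f) x ^ 2 ≤ pi ⬝ᵥ P *ᵥ (f ^ 2) :=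
        Finset.sum_le_sum fun x _ => mul_le_mul_of_nonneg_left (hP.mulVec_sq_le f x) (hpi x)
    _ = ∑ x, pi x * f x ^ 2 := by rw [dotProduct_mulVec, hstat]; rfl

variable [DecidableEq Ω]

theorem toBilin'_diagonal_apply (pi f g : Ω → ℝ) :
    toBilin' (diagonal pi) f g = ∑ x, pi x * (f x * g x) := by
  rw [toBilin'_apply', dotProduct]
  exact Finset.sum_congr rfl fun x _ => by rw [mulVec_diagonal]; ring

theorem IsReversible.toBilin'_mulVec (hrev : IsReversible P pi) (f g : Ω → ℝ) :
    toBilin' (diagonal pi) (P *ᵥ f) g = toBilin' (diagonal pi) f (P *ᵥ g) := by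
  simp only [toBilin'_diagonal_apply, mulVec, dotProduct, Finset.mul_sum, Finset.sum_mul]
  rw [Finset.sum_comm]
  refine Finset.sum_congr rfl fun y _ => Finset.sum_congr rfl fun x _ => ?_
  linear_combination (f y * g x) * hrev x y

theorem IsReversible.sum_mul_pow_sub_pow_sq_le (hrev : IsReversible P pi) (hP : IsStochastic P)
    (hpi : ∀ x, 0 ≤ pi x) (f : Ω → ℝ) (n : ℕ) :
    (n + 1) * (n + 2) * ∑ x, pi x * ((P ^ n *ᵥ f) x - (P ^ (n + 2) *ᵥ f) x) ^ 2 ≤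
      2 * ∑ x, pi x * f x ^ 2 := by
  have h := succ_mul_bilin_pow_sub_pow_add_two_le (B := toBilin' (diagonal pi)) (T := toLin' P)
    (fun f => ?_) hrev.toBilin'_mulVec (fun f => ?_) f n
  · simpa only [← toLin'_pow, toLin'_apply, toBilin'_diagonal_apply, ← sq, Pi.sub_apply] using h
  · simp only [toBilin'_diagonal_apply, ← sq]
    exact Finset.sum_nonneg fun x _ => mul_nonneg (hpi x) (sq_nonneg _)
  · simpa only [toLin'_apply, toBilin'_diagonal_apply, ← sq] using
      sum_mul_mulVec_sq_le hP hpi (hrev.vecMul_eq hP) f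

theorem IsReversible.sum_mul_abs_pow_sub_pow_le (hrev : IsReversible P pi) (hP : IsStochastic P)
    (hpi : IsProbVec pi) {f : Ω → ℝ} (hf : ‖f‖ ≤ 1) (n : ℕ) :
    ∑ x, pi x * |(P ^ n *ᵥ f) x - (P ^ (n + 2) *ᵥ f) x| ≤ 2 / (n + 1) := by
  have hf_sq : ∑ x, pi x * f x ^ 2 ≤ 1 := by
    rw [← hpi.2]
    refine Finset.sum_le_sum fun x _ => mul_le_of_le_one_right (hpi.1 x) ?_
    rw [sq_le_one_iff_abs_le_one]
    exact (norm_le_pi_norm f x).trans hf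
  have hdecay := hrev.sum_mul_pow_sub_pow_sq_le hP hpi.1 f n
  have hcs := tsum_mul_abs_le_sqrt hpi.1 (hpi.2 ▸ hasSum_fintype pi)
    (hasSum_fintype fun x => pi x * ((P ^ n *ᵥ f) x - (P ^ (n + 2) *ᵥ f) x) ^ 2)
  rw [tsum_fintype] at hcs
  refine hcs.trans ((Real.sqrt_le_left (by positivity)).2 ?_)
  have hS : 0 ≤ ∑ x, pi x * ((P ^ n *ᵥ f) x - (P ^ (n + 2) *ᵥ f) x) ^ 2 :=
    Finset.sum_nonneg fun x _ => mul_nonneg (hpi.1 x) (sq_nonneg _)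
  rw [div_pow, le_div_iff₀ (by positivity)]
  nlinarith [mul_nonneg hS (n.cast_nonneg' : (0 : ℝ) ≤ n)]

end ReversibleDecay

section Distances

open scoped Matrix.Norms.Operator

variable {Ω : Type*} [Fintype Ω] {P Q : Matrix Ω Ω ℝ} {pi : Ω → ℝ}

theorem IsProbVec.isStochastic_replicateRow (hpi : IsProbVec pi) :
    IsStochastic (replicateRow Ω pi) :=
  ⟨fun _ y => hpi.1 y, fun _ => hpi.2⟩

variable [DecidableEq Ω]

theorem contDistMax_le_add_sub (hP : IsStochastic P) (pi : Ω → ℝ) {a b : ℝ} (ha : 0 ≤ a)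
    (hab : a ≤ b) : contDistMax P pi a ≤ contDistMax P pi b + (b - a) := by
  have h := norm_sub_le_norm_sub_add_norm_sub (heatKernel P a) (heatKernel P b)
    (replicateRow Ω pi)
  have hlip := norm_heatKernel_sub_le hP.norm_pow_le_one ha hab
  rw [contDistMax_eq_norm, contDistMax_eq_norm]
  linarith

theorem contDistMax_le_add_sqrt (hP : IsStochastic P) (pi : Ω → ℝ) {a : ℝ} (ha : 0 < a) (b : ℝ) :
    contDistMax P pi a ≤ contDistMax P pi b + √(Real.exp ((b - a) ^ 2 / a) - 1) / 2 := by
  have h := norm_sub_le_norm_sub_add_norm_sub (heatKernel P a) (heatKernel P b)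
    (replicateRow Ω pi)
  have hchi := norm_heatKernel_sub_le_sqrt hP.norm_pow_le_one ha b
  rw [contDistMax_eq_norm, contDistMax_eq_norm]
  linarith

theorem continuous_contDistMax (P : Matrix Ω Ω ℝ) (pi : Ω → ℝ) :
    Continuous (contDistMax P pi) := by
  simp only [funext (contDistMax_eq_norm P pi)]
  exact ((continuous_heatKernel P).sub continuous_const).norm.div_const 2

theorem norm_aveKernel_sub_le (hP : IsStochastic P) (pi : Ω → ℝ) {m k : ℕ} (hmk : m ≤ k) :
    ‖aveKernel P k - replicateRow Ω pi‖ ≤ ‖aveKernel P m - replicateRow Ω pi‖ := by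
  have hfactor : aveKernel P k - replicateRow Ω pi =
      P ^ (k - m) * (aveKernel P m - replicateRow Ω pi) := by
    rw [mul_sub, pow_mul_aveKernel, Nat.sub_add_cancel hmk, (hP.pow _).mul_replicateRow]
  rw [hfactor]
  exact (norm_mul_le _ _).trans <|
    mul_le_of_le_one_left (norm_nonneg _) (hP.norm_pow_le_one _)

theorem norm_sub_replicateRow_le_two (hQ : ‖Q‖ ≤ 1) (hpi : IsProbVec pi) :
    ‖Q - replicateRow Ω pi‖ ≤ 2 := by
  linarith [norm_sub_le Q (replicateRow Ω pi), hpi.isStochastic_replicateRow.norm_le_one]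

theorem norm_sub_smul_replicateRow_le (hQ : IsStochastic Q) (hpi : IsProbVec pi) {η : ℝ}
    (hη : ∀ x y, η * pi y ≤ Q x y) : ‖Q - η • replicateRow Ω pi‖ ≤ 1 - η := by
  have hη1 : η ≤ 1 := by
    obtain ⟨x, -⟩ : (Finset.univ : Finset Ω).Nonempty :=
      Finset.nonempty_of_sum_ne_zero (hpi.2 ▸ one_ne_zero)
    calc η = ∑ y, η * pi y := by rw [← Finset.mul_sum, hpi.2, mul_one]
      _ ≤ ∑ y, Q x y := Finset.sum_le_sum fun y _ => hη x y
      _ = 1 := hQ.2 x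
  refine linfty_opNorm_le (sub_nonneg.2 hη1) fun x => ?_
  simp only [Matrix.sub_apply, Matrix.smul_apply, replicateRow_apply, smul_eq_mul,
    abs_of_nonneg (sub_nonneg.2 (hη x _)), Finset.sum_sub_distrib, ← Finset.mul_sum, hpi.2,
    hQ.2 x, mul_one, le_refl]

/- Doeblin's argument: `Q - η • Π` acts on `Q ^ n - Π` in the same way as `Q`, and its norm is at
most `1 - η` because its entries are nonnegative. -/
theorem tendsto_pow_replicateRow (hQ : IsStochastic Q) (hpos : ∀ x y, 0 < Q x y)
    (hpi : IsProbVec pi) (hstat : replicateRow Ω pi * Q = replicateRow Ω pi) :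
    Tendsto (Q ^ ·) atTop (nhds (replicateRow Ω pi)) := by
  obtain ⟨η, hη_pos, hη⟩ : ∃ η > 0, ∀ x y, η * pi y ≤ Q x y := by
    obtain ⟨η, hη_pos, hη⟩ := Pi.exists_forall_pos_add_lt (x := fun _ : Ω × Ω => (0 : ℝ))
      (y := fun p => Q p.1 p.2) fun p => hpos p.1 p.2
    refine ⟨η, hη_pos, fun x y => (mul_le_of_le_one_right hη_pos.le ?_).trans
      ((zero_add η).symm.trans_le (hη (x, y)).le)⟩
    exact hpi.2 ▸ Finset.single_le_sum (fun y _ => hpi.1 y) (Finset.mem_univ y)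
  have hcontr := norm_sub_smul_replicateRow_le hQ hpi hη
  have hstep : ∀ n, Q ^ (n + 1) - replicateRow Ω pi =
      (Q - η • replicateRow Ω pi) * (Q ^ n - replicateRow Ω pi) := fun n => by
    rw [sub_mul, smul_mul_assoc, mul_sub, mul_sub, mul_pow_of_mul_eq hstat,
      hpi.isStochastic_replicateRow.mul_replicateRow, sub_self, smul_zero, sub_zero, pow_succ',
      hQ.mul_replicateRow]
  have hgeom : ∀ n, ‖Q ^ n - replicateRow Ω pi‖ ≤ (1 - η) ^ n * ‖Q ^ 0 - replicateRow Ω pi‖ :=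
    fun n => le_geom (u := fun n => ‖Q ^ n - replicateRow Ω pi‖)
      ((norm_nonneg _).trans hcontr) n fun k _ => by
        rw [hstep]
        exact (norm_mul_le _ _).trans (mul_le_mul_of_nonneg_right hcontr (norm_nonneg _))
  refine tendsto_iff_norm_sub_tendsto_zero.2 (squeeze_zero (fun n => norm_nonneg _) hgeom ?_)
  rw [← zero_mul ‖Q ^ 0 - replicateRow Ω pi‖]
  exact (tendsto_pow_atTop_nhds_zero_of_lt_one ((norm_nonneg _).trans hcontr)
    (by linarith)).mul_const _

theorem heatKernel_pos (hP : IsStochastic P) (hirr : IsIrreducibleMatrix P) {t : ℝ} (ht : 0 < t)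
    (x y : Ω) : 0 < heatKernel P t x y := by
  obtain ⟨n, hn⟩ := hirr x y
  have hsum := hasSum_heatKernel_apply P t x y
  rw [← hsum.tsum_eq]
  refine hsum.summable.tsum_pos (fun k => ?_) n ?_
  · exact mul_nonneg (poissonWeight_nonneg ht.le k) ((hP.pow k).1 x y)
  · unfold poissonWeight
    positivity

theorem IsMC.tendsto_contDistMax (h : IsMC P pi) :
    Tendsto (fun n : ℕ => contDistMax P pi n) atTop (nhds 0) := by
  obtain ⟨hP, hirr, hpi, hstat⟩ := h
  have hlim := tendsto_pow_replicateRow (isStochastic_heatKernel hP zero_le_one)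
    (heatKernel_pos hP hirr zero_lt_one) hpi
    (mul_heatKernel_of_mul_eq (replicateRow_mul_of_vecMul_eq hstat) 1)
  simpa only [contDistMax_eq_norm, heatKernel_natCast, zero_div] using
    (tendsto_iff_norm_sub_tendsto_zero.1 hlim).div_const 2

end Distances

section Comparison

open scoped Matrix.Norms.Operator

variable {Ω : Type*} [Fintype Ω] [DecidableEq Ω] {P : Matrix Ω Ω ℝ} {pi : Ω → ℝ}

theorem hasSum_poissonWeight_smul_aveKernel (P : Matrix Ω Ω ℝ) (t : ℝ) :
    HasSum (fun k => poissonWeight t k • aveKernel P k)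
      ((2 : ℝ)⁻¹ • (heatKernel P t + heatKernel P t * P)) := by
  have h := hasSum_heatKernel P t
  refine ((h.add (h.mul_right P)).const_smul (2 : ℝ)⁻¹).congr_fun fun k => ?_
  rw [aveKernel, pow_succ, smul_mul_assoc, ← smul_add, smul_comm]

theorem norm_heatKernel_sub_half_add_le (hP : IsStochastic P) {t : ℝ} (ht : 0 < t) :
    ‖heatKernel P t - (2 : ℝ)⁻¹ • (heatKernel P t + heatKernel P t * P)‖ ≤ √(1 / t) / 2 := by
  have hhalf : heatKernel P t - (2 : ℝ)⁻¹ • (heatKernel P t + heatKernel P t * P) =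
      (2 : ℝ)⁻¹ • (heatKernel P t - heatKernel P t * P) := by
    module
  rw [hhalf, norm_smul, norm_inv, Real.norm_ofNat]
  linarith [norm_heatKernel_sub_heatKernel_mul_le hP.norm_pow_le_one ht]

theorem contDistMax_le_aveDistMax_add (hP : IsStochastic P) (hpi : IsProbVec pi) {s : ℕ} {t : ℝ}
    (hst : s < t) :
    contDistMax P pi t ≤ aveDistMax P pi s + √(1 / t) / 4 + t / (t - s) ^ 2 := by
  have ht : 0 < t := s.cast_nonneg.trans_lt hst
  have hV := (hasSum_poissonWeight_smul_aveKernel P t).sub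
    ((hasSum_poissonWeight t).smul_const (replicateRow Ω pi))
  simp only [← smul_sub, one_smul] at hV
  have hconc := norm_le_of_hasSum_poissonWeight_smul ht.le (sub_pos.2 hst)
    (fun k => norm_sub_replicateRow_le_two (hP.norm_aveKernel_le_one k) hpi)
    (fun _ => norm_nonneg (aveKernel P s - replicateRow Ω pi))
    (fun k hk => norm_aveKernel_sub_le hP pi (by
      have hsk : (s : ℝ) < k := by linarith [(abs_lt.1 hk).1]
      exact_mod_cast hsk.le))
    hV ((hasSum_poissonWeight t).mul_right _)
  have hhalf := norm_heatKernel_sub_half_add_le hP ht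
  have htri := norm_sub_le_norm_sub_add_norm_sub (heatKernel P t)
    ((2 : ℝ)⁻¹ • (heatKernel P t + heatKernel P t * P)) (replicateRow Ω pi)
  rw [contDistMax_eq_norm, aveDistMax_natCast_eq_norm]
  linarith

theorem aveKernel_succ_sub_aveKernel (P : Matrix Ω Ω ℝ) (m : ℕ) :
    aveKernel P (m + 1) - aveKernel P m = (2 : ℝ)⁻¹ • (P ^ (m + 2) - P ^ m) := by
  simp only [aveKernel]
  module

theorem IsReversible.sum_mul_abs_aveKernel_succ_sub_le (hrev : IsReversible P pi)
    (hP : IsStochastic P) (hpi : IsProbVec pi) {f : Ω → ℝ} (hf : ‖f‖ ≤ 1) (m : ℕ) :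
    ∑ x, pi x * |(aveKernel P (m + 1) *ᵥ f) x - (aveKernel P m *ᵥ f) x| ≤ 1 / (m + 1) := by
  have hstep : ∀ x, |(aveKernel P (m + 1) *ᵥ f) x - (aveKernel P m *ᵥ f) x| =
      2⁻¹ * |(P ^ m *ᵥ f) x - (P ^ (m + 2) *ᵥ f) x| := fun x => by
    rw [← Pi.sub_apply, ← sub_mulVec, aveKernel_succ_sub_aveKernel, smul_mulVec, sub_mulVec,
      Pi.smul_apply, smul_eq_mul, abs_mul, abs_inv, Nat.abs_ofNat, Pi.sub_apply, abs_sub_comm]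
  have h := hrev.sum_mul_abs_pow_sub_pow_le hP hpi hf m
  simp only [hstep, mul_left_comm _ (2 : ℝ)⁻¹, ← Finset.mul_sum]
  rw [show (1 : ℝ) / (m + 1) = 2⁻¹ * (2 / (m + 1)) by ring]
  gcongr

theorem IsStochastic.norm_aveKernel_mulVec_le (hP : IsStochastic P) {f : Ω → ℝ} (hf : ‖f‖ ≤ 1)
    (m : ℕ) : ‖aveKernel P m *ᵥ f‖ ≤ 1 :=
  (linfty_opNorm_mulVec _ _).trans <|
    mul_le_one₀ (hP.norm_aveKernel_le_one m) (norm_nonneg f) hf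

/- The total variation along the time window, capped at `2` so as to stay bounded, dominates the
oscillation; its stationary mean is small by the decay of `P ^ m - P ^ (m + 2)`. -/
theorem IsReversible.exists_oscillation_bound (hrev : IsReversible P pi) (hP : IsStochastic P)
    (hpi : IsProbVec pi) {f : Ω → ℝ} (hf : ‖f‖ ≤ 1) (s n : ℕ) :
    ∃ g : Ω → ℝ, (∀ x, g x ∈ Set.Icc 0 2) ∧ pi ⬝ᵥ g ≤ n / (s + 1) ∧
      ∀ i ≤ n, ∀ x, |(aveKernel P (s + i) *ᵥ f) x - (aveKernel P s *ᵥ f) x| ≤ g x := by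
  refine ⟨fun x => min (∑ i ∈ Finset.range n,
    |(aveKernel P (s + i + 1) *ᵥ f) x - (aveKernel P (s + i) *ᵥ f) x|) 2,
    fun x => ⟨by positivity, min_le_right _ _⟩, ?_, fun i hi x => le_min ?_ ?_⟩
  · calc pi ⬝ᵥ _ ≤ ∑ x, pi x * ∑ i ∈ Finset.range n,
          |(aveKernel P (s + i + 1) *ᵥ f) x - (aveKernel P (s + i) *ᵥ f) x| :=
        Finset.sum_le_sum fun x _ => mul_le_mul_of_nonneg_left (min_le_left _ _) (hpi.1 x)
      _ = ∑ i ∈ Finset.range n, ∑ x, pi x *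
          |(aveKernel P (s + i + 1) *ᵥ f) x - (aveKernel P (s + i) *ᵥ f) x| := by
        simp only [Finset.mul_sum]
        rw [Finset.sum_comm]
      _ ≤ ∑ i ∈ Finset.range n, 1 / ((s : ℝ) + 1) := Finset.sum_le_sum fun i _ =>
        (hrev.sum_mul_abs_aveKernel_succ_sub_le hP hpi hf (s + i)).trans <| by
          push_cast
          gcongr
          exact le_add_of_nonneg_right i.cast_nonneg
      _ = n / (s + 1) := by rw [Finset.sum_const, Finset.card_range, nsmul_eq_mul, mul_one_div]
  · calc |(aveKernel P (s + i) *ᵥ f) x - (aveKernel P s *ᵥ f) x|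
      _ = dist ((aveKernel P (s + 0) *ᵥ f) x) ((aveKernel P (s + i) *ᵥ f) x) := by
        rw [dist_comm, Real.dist_eq, add_zero]
      _ ≤ ∑ j ∈ Finset.range i,
          dist ((aveKernel P (s + j) *ᵥ f) x) ((aveKernel P (s + (j + 1)) *ᵥ f) x) :=
        dist_le_range_sum_dist (fun j => (aveKernel P (s + j) *ᵥ f) x) i
      _ ≤ ∑ j ∈ Finset.range n,
          dist ((aveKernel P (s + j) *ᵥ f) x) ((aveKernel P (s + (j + 1)) *ᵥ f) x) :=
        Finset.sum_le_sum_of_subset_of_nonneg (Finset.range_subset_range.2 hi)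
          fun _ _ _ => dist_nonneg
      _ = ∑ j ∈ Finset.range n,
          |(aveKernel P (s + j + 1) *ᵥ f) x - (aveKernel P (s + j) *ᵥ f) x| :=
        Finset.sum_congr rfl fun j _ => by rw [dist_comm, Real.dist_eq, add_assoc]
  · have h1 := norm_le_pi_norm (aveKernel P (s + i) *ᵥ f) x
    have h2 := norm_le_pi_norm (aveKernel P s *ᵥ f) x
    have h3 := norm_sub_le ((aveKernel P (s + i) *ᵥ f) x) ((aveKernel P s *ᵥ f) x)
    rw [Real.norm_eq_abs] at h3
    linarith [hP.norm_aveKernel_mulVec_le hf (s + i), hP.norm_aveKernel_mulVec_le hf s]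

theorem mulVec_apply_le_dotProduct_add (hP : IsStochastic P) (hpi : IsProbVec pi) {g : Ω → ℝ}
    (hg : ∀ x, g x ∈ Set.Icc 0 2) (x : Ω) :
    (P *ᵥ g) x ≤ pi ⬝ᵥ g + ‖P - replicateRow Ω pi‖ := by
  have hcenter : (P *ᵥ g) x - pi ⬝ᵥ g = ((P - replicateRow Ω pi) *ᵥ (g - 1)) x := by
    have hone : (P - replicateRow Ω pi) *ᵥ (1 : Ω → ℝ) = 0 := by
      ext y
      rw [mulVec, dotProduct_one]
      simp only [Matrix.sub_apply, Finset.sum_sub_distrib, hP.2,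
        hpi.isStochastic_replicateRow.2, sub_self, Pi.zero_apply]
    rw [mulVec_sub, hone, sub_zero, sub_mulVec, replicateRow_mulVec_eq_const, Pi.sub_apply,
      Function.const_apply]
  have hnorm : ‖g - 1‖ ≤ 1 := (pi_norm_le_iff_of_nonneg zero_le_one).2 fun y => by
    rw [Pi.sub_apply, Pi.one_apply, Real.norm_eq_abs, abs_le]
    constructor <;> linarith [(hg y).1, (hg y).2]
  have hle : ‖(P - replicateRow Ω pi) *ᵥ (g - 1)‖ ≤ ‖P - replicateRow Ω pi‖ :=
    (linfty_opNorm_mulVec _ _).trans (mul_le_of_le_one_right (norm_nonneg _) hnorm)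
  linarith [(le_abs_self _).trans ((norm_le_pi_norm _ x).trans hle)]

theorem hasSum_heatKernel_mulVec_apply (P : Matrix Ω Ω ℝ) (t : ℝ) (f : Ω → ℝ) (x : Ω) :
    HasSum (fun k => poissonWeight t k * (P ^ k *ᵥ f) x) ((heatKernel P t *ᵥ f) x) := by
  simp only [mulVec, dotProduct, Finset.mul_sum, ← mul_assoc]
  exact hasSum_sum fun y _ => (hasSum_heatKernel_apply P t x y).mul_right (f y)

theorem IsReversible.abs_aveKernel_sub_heatKernel_mulVec_apply_le (hrev : IsReversible P pi)
    (hP : IsStochastic P) (hpi : IsProbVec pi) {t : ℝ} (ht : 0 ≤ t) {r : ℕ} (hr : 0 < r) (s : ℕ)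
    {f : Ω → ℝ} (hf : ‖f‖ ≤ 1) (x : Ω) :
    |(aveKernel P (⌈t⌉₊ + r + s) *ᵥ f) x - (heatKernel P t *ᵥ (aveKernel P s *ᵥ f)) x| ≤
      2 * r / (s + 1) + ‖heatKernel P t - replicateRow Ω pi‖ + 2 * (t / r ^ 2) := by
  obtain ⟨g, hg_mem, hg_mean, hg⟩ := hrev.exists_oscillation_bound hP hpi hf s (2 * r)
  have hV := ((hasSum_poissonWeight t).mul_right
    ((aveKernel P (⌈t⌉₊ + r + s) *ᵥ f) x)).sub
    (hasSum_heatKernel_mulVec_apply P t (aveKernel P s *ᵥ f) x)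
  simp only [one_mul, ← mul_sub, mulVec_mulVec, pow_mul_aveKernel] at hV
  have hnorm : ∀ k, ‖(aveKernel P k *ᵥ f) x‖ ≤ 1 := fun k =>
    (norm_le_pi_norm _ x).trans (hP.norm_aveKernel_mulVec_le hf k)
  have hconc := norm_le_of_hasSum_poissonWeight_smul (M := 2) (c := fun k => (P ^ k *ᵥ g) x) ht
    (Nat.cast_pos.2 hr)
    (fun k => (norm_sub_le _ _).trans (by linarith [hnorm (⌈t⌉₊ + r + s), hnorm (k + s)]))
    (fun k => Finset.sum_nonneg fun y _ => mul_nonneg ((hP.pow k).1 x y) (hg_mem y).1)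
    (fun k hk => ?_) hV (hasSum_heatKernel_mulVec_apply P t g x)
  · have hmean := mulVec_apply_le_dotProduct_add (isStochastic_heatKernel hP ht) hpi hg_mem x
    push_cast at hg_mean
    rw [← Real.norm_eq_abs, mulVec_mulVec]
    linarith
  · obtain ⟨hk_lower, hk_upper⟩ := abs_lt.1 hk
    have hceil := Nat.le_ceil t
    have hceil_lt := Nat.ceil_lt_add_one ht
    obtain ⟨i, hi⟩ : ∃ i, ⌈t⌉₊ + r = k + i := Nat.exists_eq_add_of_le (by
      exact_mod_cast (show (k : ℝ) ≤ ⌈t⌉₊ + r by linarith))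
    have hi_le : i ≤ 2 * r := by
      have hi_cast : (⌈t⌉₊ : ℝ) + r = k + i := by exact_mod_cast hi
      have : (i : ℝ) < 2 * r + 1 := by linarith
      exact Nat.lt_succ_iff.1 (by exact_mod_cast this)
    have hfactor : (aveKernel P (⌈t⌉₊ + r + s) *ᵥ f) x - (aveKernel P (k + s) *ᵥ f) x =
        (P ^ k *ᵥ (aveKernel P (s + i) *ᵥ f - aveKernel P s *ᵥ f)) x := by
      rw [mulVec_sub, Pi.sub_apply, mulVec_mulVec, mulVec_mulVec, pow_mul_aveKernel,
        pow_mul_aveKernel, hi, add_assoc, add_comm i]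
    rw [hfactor, Real.norm_eq_abs]
    exact (hP.pow k).abs_mulVec_apply_le (hg i hi_le) x

theorem replicateRow_mul_aveKernel (h : replicateRow Ω pi * P = replicateRow Ω pi) (m : ℕ) :
    replicateRow Ω pi * aveKernel P m = replicateRow Ω pi := by
  rw [aveKernel, mul_smul_comm, mul_add, mul_pow_of_mul_eq h, mul_pow_of_mul_eq h]
  module

theorem IsReversible.aveDistMax_le_contDistMax_add (hrev : IsReversible P pi)
    (hP : IsStochastic P) (hpi : IsProbVec pi) {t : ℝ} (ht : 0 ≤ t) {r : ℕ} (hr : 0 < r)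
    (s : ℕ) :
    aveDistMax P pi (⌈t⌉₊ + r + s : ℕ) ≤ 2 * contDistMax P pi t + r / (s + 1) + t / r ^ 2 := by
  rw [aveDistMax_natCast_eq_norm, contDistMax_eq_norm, div_le_iff₀ two_pos]
  refine linfty_opNorm_le_of_norm_mulVec_le (by positivity) fun f hf => ?_
  have hmix : ‖(heatKernel P t - replicateRow Ω pi) *ᵥ (aveKernel P s *ᵥ f)‖ ≤
      ‖heatKernel P t - replicateRow Ω pi‖ := (linfty_opNorm_mulVec _ _).trans <|
    mul_le_of_le_one_right (norm_nonneg _) (hP.norm_aveKernel_mulVec_le hf.le s)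
  have hsplit : (aveKernel P (⌈t⌉₊ + r + s) - replicateRow Ω pi) *ᵥ f =
      (aveKernel P (⌈t⌉₊ + r + s) *ᵥ f - heatKernel P t *ᵥ (aveKernel P s *ᵥ f)) +
        (heatKernel P t - replicateRow Ω pi) *ᵥ (aveKernel P s *ᵥ f) := by
    rw [sub_mulVec, sub_mulVec, mulVec_mulVec f (replicateRow Ω pi),
      replicateRow_mul_aveKernel (replicateRow_mul_of_vecMul_eq (hrev.vecMul_eq hP)),
      sub_add_sub_cancel]
  refine (pi_norm_le_iff_of_nonneg (by positivity)).2 fun x => ?_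
  have hcore := hrev.abs_aveKernel_sub_heatKernel_mulVec_apply_le hP hpi ht hr s hf.le x
  rw [hsplit, Pi.add_apply]
  exact (norm_add_le _ _).trans <|
    (add_le_add hcore ((norm_le_pi_norm _ x).trans hmix)).trans_eq (by ring)

end Comparison

section MixingTimes

open scoped Matrix.Norms.Operator

variable {Ω : Type*} [Fintype Ω] [DecidableEq Ω] {P : Matrix Ω Ω ℝ} {pi : Ω → ℝ} {ε δ η t : ℝ}

theorem contMix_nonneg (P : Matrix Ω Ω ℝ) (pi : Ω → ℝ) (ε : ℝ) : 0 ≤ contMix P pi ε :=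
  Real.sInf_nonneg fun _ ht => ht.1

theorem contMix_le (ht : 0 ≤ t) (h : contDistMax P pi t ≤ ε) : contMix P pi ε ≤ t :=
  csInf_le ⟨0, fun _ hs => hs.1⟩ ⟨ht, h⟩

theorem IsMC.contDistMax_contMix_le (h : IsMC P pi) (hε : 0 < ε) :
    contDistMax P pi (contMix P pi ε) ≤ ε := by
  have hclosed : IsClosed {t : ℝ | 0 ≤ t ∧ contDistMax P pi t ≤ ε} :=
    isClosed_Ici.inter (isClosed_le (continuous_contDistMax P pi) continuous_const)
  obtain ⟨n, hn⟩ := (h.tendsto_contDistMax.eventually_le_const hε).exists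
  exact (hclosed.csInf_mem ⟨n, n.cast_nonneg, hn⟩ ⟨0, fun _ ht => ht.1⟩).2

theorem IsMC.contMix_anti (h : IsMC P pi) (hε : 0 < ε) (hεδ : ε ≤ δ) :
    contMix P pi δ ≤ contMix P pi ε :=
  contMix_le (contMix_nonneg P pi ε) ((h.contDistMax_contMix_le hε).trans hεδ)

theorem IsStochastic.le_contDistMax_contMix (hP : IsStochastic P) (h : 0 < contMix P pi ε) :
    ε ≤ contDistMax P pi (contMix P pi ε) := by
  by_contra! hlt
  set T := contMix P pi ε
  set a := max 0 (T - (ε - contDistMax P pi T))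
  have haT : a < T := max_lt h (by linarith)
  have ha : contDistMax P pi a ≤ ε :=
    (contDistMax_le_add_sub hP pi (le_max_left _ _) haT.le).trans <| by
      linarith [le_max_right 0 (T - (ε - contDistMax P pi T))]
  exact (contMix_le (le_max_left _ _) ha).not_gt haT

theorem half_le_contDistMax_zero [Nontrivial Ω] (P : Matrix Ω Ω ℝ) (hpi : IsProbVec pi) :
    1 / 2 ≤ contDistMax P pi 0 := by
  have hidem : IsIdempotentElem (1 - replicateRow Ω pi) :=
    IsIdempotentElem.one_sub (hpi.isStochastic_replicateRow.mul_replicateRow pi)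
  have hne : 1 - replicateRow Ω pi ≠ 0 := fun h0 => by
    obtain ⟨x, y, hxy⟩ := exists_pair_ne Ω
    have heq := sub_eq_zero.1 h0
    have hx := congrFun₂ heq x x
    have hy := congrFun₂ heq y x
    rw [one_apply_eq] at hx
    rw [one_apply_ne hxy.symm] at hy
    exact zero_ne_one (hy.trans hx.symm)
  have hnorm : 1 ≤ ‖1 - replicateRow Ω pi‖ := by
    have hsq := norm_mul_le (1 - replicateRow Ω pi) (1 - replicateRow Ω pi)
    rw [hidem.eq] at hsq
    exact (le_mul_iff_one_le_left (norm_pos_iff.2 hne)).1 hsq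
  rw [contDistMax_eq_norm, heatKernel_zero]
  linarith

theorem IsMC.one_quarter_le_contMix_sub [Nontrivial Ω] (h : IsMC P pi) :
    1 / 4 ≤ contMix P pi (1 / 4) - contMix P pi (3 / 4) := by
  have hanti := h.contMix_anti (ε := 1 / 4) (δ := 3 / 4) (by norm_num) (by norm_num)
  have hlip := contDistMax_le_add_sub h.1 pi (contMix_nonneg P pi (3 / 4)) hanti
  have hquarter := h.contDistMax_contMix_le (ε := 1 / 4) (by norm_num)
  have hhalf : 1 / 2 ≤ contDistMax P pi (contMix P pi (3 / 4)) := by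
    rcases (contMix_nonneg P pi (3 / 4)).eq_or_lt with hzero | hpos
    · exact hzero ▸ half_le_contDistMax_zero P h.2.2.1
    · linarith [h.1.le_contDistMax_contMix hpos]
  linarith

theorem IsMC.sqrt_contMix_le (h : IsMC P pi) :
    √(contMix P pi (3 / 4)) ≤ 2 * (contMix P pi (1 / 4) - contMix P pi (3 / 4)) := by
  have hanti := h.contMix_anti (ε := 1 / 4) (δ := 3 / 4) (by norm_num) (by norm_num)
  set S := contMix P pi (1 / 4)
  set T := contMix P pi (3 / 4)
  rcases (contMix_nonneg P pi (3 / 4)).eq_or_lt with hzero | hT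
  · rw [show T = 0 from hzero.symm, Real.sqrt_zero]
    linarith [contMix_nonneg P pi (1 / 4)]
  · have hchi := contDistMax_le_add_sqrt h.1 pi hT S
    have hquarter : contDistMax P pi S ≤ 1 / 4 := h.contDistMax_contMix_le (by norm_num)
    have hexp : 1 ≤ Real.exp ((S - T) ^ 2 / T) - 1 :=
      Real.one_le_sqrt.1 (by linarith [h.1.le_contDistMax_contMix hT])
    have hlog : Real.log 2 ≤ (S - T) ^ 2 / T :=
      (Real.log_le_iff_le_exp two_pos).2 (by linarith)
    rw [le_div_iff₀ hT] at hlog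
    refine Real.sqrt_le_iff.2 ⟨by linarith, ?_⟩
    nlinarith [Real.log_two_gt_d9]

/- Passing from distance `3/4` to distance `1/4` takes time of order `√T` by the chi-square bound
and of order `1` by the Lipschitz bound, so `√T + 1` is absorbed in the cutoff window. -/
theorem IsMC.sqrt_contMix_add_one_le [Nontrivial Ω] (h : IsMC P pi) (hη : 0 < η)
    (hη' : η ≤ 1 / 4) :
    √(contMix P pi η) + 1 ≤ 8 * (contMix P pi η - contMix P pi (1 - η)) := by
  have hleft : contMix P pi (1 - η) ≤ contMix P pi (3 / 4) :=
    h.contMix_anti (by norm_num) (by linarith)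
  have hright : contMix P pi (1 / 4) ≤ contMix P pi η := h.contMix_anti hη hη'
  set W := contMix P pi η - contMix P pi (1 - η)
  have hWquarter : 1 / 4 ≤ W := by linarith [h.one_quarter_le_contMix_sub]
  have hT : contMix P pi (3 / 4) ≤ (2 * W) ^ 2 :=
    (Real.sqrt_le_left (by linarith)).1 (by linarith [h.sqrt_contMix_le])
  have hsqrt : √(contMix P pi η) ≤ 4 * W :=
    (Real.sqrt_le_left (by linarith)).2 (by nlinarith)
  linarith

theorem aveMix_le {m : ℕ} (h : aveDistMax P pi m ≤ ε) : aveMix P pi ε ≤ m :=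
  Nat.sInf_le h

theorem IsReversible.aveDistMax_le_contDistMax_add_two_div (hrev : IsReversible P pi)
    (hP : IsStochastic P) (hpi : IsProbVec pi) (ht : 0 ≤ t) {K q : ℕ} (hK : 0 < K) (hq : 0 < q)
    (htq : t ≤ (q : ℝ) ^ 2) :
    aveDistMax P pi (⌈t⌉₊ + K * q + K * (K * q) : ℕ) ≤ 2 * contDistMax P pi t + 2 / K := by
  have hcomp := hrev.aveDistMax_le_contDistMax_add hP hpi ht (Nat.mul_pos hK hq) (K * (K * q))
  have hdrift : ((K * q : ℕ) : ℝ) / ((K * (K * q) : ℕ) + 1) ≤ 1 / K := by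
    rw [div_le_div_iff₀ (by positivity) (by positivity)]
    push_cast
    linarith
  have hvar : t / (K * q : ℕ) ^ 2 ≤ 1 / K := by
    rw [div_le_div_iff₀ (by positivity) (by positivity)]
    push_cast
    calc t * K ≤ (q : ℝ) ^ 2 * (K * K) := by
          gcongr
          exact le_mul_of_one_le_left K.cast_nonneg (Nat.one_le_cast.2 hK)
      _ = 1 * (K * q) ^ 2 := by ring
  linear_combination hcomp + hdrift + hvar

theorem IsReversible.exists_aveDistMax_le_contDistMax_add (hrev : IsReversible P pi)
    (hP : IsStochastic P) (hpi : IsProbVec pi) (ht : 0 ≤ t) (hε : 0 < ε) (hε' : ε ≤ 1) :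
    ∃ m : ℕ, aveDistMax P pi m ≤ 2 * contDistMax P pi t + ε ∧
      (m : ℝ) ≤ t + 25 / ε ^ 2 * (√t + 1) := by
  have hone : 1 ≤ 1 / ε := (one_le_div hε).2 hε'
  have hceil := Nat.le_ceil (2 / ε)
  have hceil_lt := Nat.ceil_lt_add_one (show 0 ≤ 2 / ε by positivity)
  set K := ⌈2 / ε⌉₊
  have hK : 0 < K := Nat.ceil_pos.2 (by positivity)
  have hK_inv : 2 / K ≤ ε := (div_le_comm₀ hε (Nat.cast_pos.2 hK)).1 hceil
  have hK_le : (K : ℝ) ≤ 3 / ε := by linear_combination hceil_lt + hone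
  obtain ⟨q, hq, htq, hq_le⟩ : ∃ q : ℕ, 0 < q ∧ t ≤ (q : ℝ) ^ 2 ∧ q ≤ √t + 2 := by
    refine ⟨⌈√t⌉₊ + 1, Nat.succ_pos _, ?_, ?_⟩ <;> push_cast
    · exact (Real.sqrt_le_left (by positivity)).1 (by linarith [Nat.le_ceil √t])
    · linarith [Nat.ceil_lt_add_one (Real.sqrt_nonneg t)]
  refine ⟨_, (hrev.aveDistMax_le_contDistMax_add_two_div hP hpi ht hK hq htq).trans
    (by linarith), ?_⟩
  push_cast
  calc (⌈t⌉₊ : ℝ) + K * q + K * (K * q) = ⌈t⌉₊ + K * (1 + K) * q := by ring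
    _ ≤ (t + 1) + 3 / ε * (1 / ε + 3 / ε) * (√t + 2) := by
      gcongr
      exact (Nat.ceil_lt_add_one ht).le
    _ = t + (1 + 12 / ε ^ 2 * (√t + 2)) := by
      field_simp
      ring
    _ ≤ t + (1 / ε ^ 2 + 12 / ε ^ 2 * (2 * √t + 2)) := by
      gcongr
      · exact (one_le_div (by positivity)).2 (pow_le_one₀ hε.le hε')
      · linarith [Real.sqrt_nonneg t]
    _ = t + 1 / ε ^ 2 * (24 * √t + 25) := by ring
    _ ≤ t + 1 / ε ^ 2 * (25 * √t + 25) := by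
      gcongr
      norm_num
    _ = t + 25 / ε ^ 2 * (√t + 1) := by ring

theorem IsRevMC.exists_aveDistMax_le (h : IsRevMC P pi) (hε : 0 < ε) (hε' : ε ≤ 1) :
    ∃ m : ℕ, aveDistMax P pi m ≤ ε ∧
      (m : ℝ) ≤ contMix P pi (ε / 4) + 100 / ε ^ 2 * (√(contMix P pi (ε / 4)) + 1) := by
  obtain ⟨m, hdist, hm⟩ := h.2.exists_aveDistMax_le_contDistMax_add h.1.1 h.1.2.2.1
    (contMix_nonneg P pi (ε / 4)) (half_pos hε) (by linarith)
  refine ⟨m, ?_, hm.trans_eq ?_⟩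
  · linarith [h.1.contDistMax_contMix_le (ε := ε / 4) (by linarith)]
  · field_simp
    ring

theorem IsRevMC.aveDistMax_aveMix_le (h : IsRevMC P pi) (hε : 0 < ε) (hε' : ε ≤ 1) :
    aveDistMax P pi (aveMix P pi ε) ≤ ε := by
  obtain ⟨m, hm, -⟩ := h.exists_aveDistMax_le hε hε'
  exact Nat.sInf_mem (s := {t : ℕ | aveDistMax P pi t ≤ ε}) ⟨m, hm⟩

theorem contMix_one_sub_half_le (hP : IsStochastic P) (hpi : IsProbVec pi) (hε : 0 < ε)
    (hε' : ε ≤ 1) {s : ℕ} (hs : aveDistMax P pi s ≤ 1 - ε) :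
    contMix P pi (1 - ε / 2) ≤ s + 4 / ε ^ 2 * (√s + 1) := by
  set R := 4 / ε ^ 2 * (√s + 1)
  have hR : 4 / ε ^ 2 ≤ R :=
    le_mul_of_one_le_right (by positivity) (by linarith [Real.sqrt_nonneg (s : ℝ)])
  have hRpos : 0 < R := lt_of_lt_of_le (by positivity) hR
  have hdist := contDistMax_le_aveDistMax_add hP hpi (lt_add_of_pos_right (s : ℝ) hRpos)
  rw [add_sub_cancel_left] at hdist
  refine contMix_le (by positivity) (hdist.trans ?_)
  have hsqrt : √(1 / (s + R)) ≤ ε / 2 := by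
    refine (Real.sqrt_le_left (half_pos hε).le).2 ?_
    calc 1 / (s + R) ≤ 1 / (4 / ε ^ 2) :=
          one_div_le_one_div_of_le (by positivity) (by linarith [(s.cast_nonneg : (0 : ℝ) ≤ s)])
      _ = (ε / 2) ^ 2 := by
          field_simp
          norm_num
  have hvar : (s + R) / R ^ 2 ≤ ε / 16 + ε / 4 := by
    have hε_sq : ε ^ 2 ≤ ε := by nlinarith
    have hR_mul : √s + 1 = ε ^ 2 / 4 * R := by
      simp only [R]
      field_simp
    have hR_one : 1 ≤ ε ^ 2 / 4 * R := by linarith [Real.sqrt_nonneg (s : ℝ)]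
    have hs_le : (s : ℝ) ≤ (ε ^ 2 / 4 * R) ^ 2 :=
      (Real.sqrt_le_left (by positivity)).1 (by linarith)
    rw [div_le_iff₀ (by positivity)]
    calc s + R ≤ (ε ^ 2 / 4 * R) ^ 2 + ε ^ 2 / 4 * R * R :=
          add_le_add hs_le (le_mul_of_one_le_left hRpos.le hR_one)
      _ = (ε ^ 2 * ε ^ 2 / 16 + ε ^ 2 / 4) * R ^ 2 := by ring
      _ ≤ (ε * 1 / 16 + ε / 4) * R ^ 2 := by
          gcongr
          exact hε_sq.trans hε'
      _ = (ε / 16 + ε / 4) * R ^ 2 := by rw [mul_one]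
  linarith

theorem IsStochastic.eq_one_of_subsingleton [Subsingleton Ω] (hP : IsStochastic P) : P = 1 := by
  ext x y
  rw [Subsingleton.elim y x, one_apply_eq, ← hP.2 x, Fintype.sum_subsingleton _ x]

theorem contMix_eq_zero_of_subsingleton [Subsingleton Ω] (P : Matrix Ω Ω ℝ) (hpi : IsProbVec pi)
    (hε : 0 ≤ ε) : contMix P pi ε = 0 := by
  refine le_antisymm (contMix_le le_rfl ?_) (contMix_nonneg P pi ε)
  rwa [contDistMax_eq_norm, heatKernel_zero, hpi.isStochastic_replicateRow.eq_one_of_subsingleton,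
    sub_self, norm_zero, zero_div]

theorem aveMix_eq_zero_of_subsingleton [Subsingleton Ω] (hP : IsStochastic P)
    (hpi : IsProbVec pi) (hε : 0 ≤ ε) : aveMix P pi ε = 0 := by
  refine Nat.le_zero.1 (aveMix_le ?_)
  rw [aveDistMax_natCast_eq_norm, hpi.isStochastic_replicateRow.eq_one_of_subsingleton, aveKernel,
    hP.eq_one_of_subsingleton, one_pow, one_pow, ← two_smul ℝ, inv_smul_smul₀ two_ne_zero, sub_self,
    norm_zero, zero_div]
  exact hε

theorem IsRevMC.aveMix_le_contMix_add (h : IsRevMC P pi) (hε : 0 < ε) (hε' : ε ≤ 1) :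
    (aveMix P pi ε : ℝ) ≤ contMix P pi (1 / 4) +
      (1 + 800 / ε ^ 2) * (contMix P pi (ε / 4) - contMix P pi (1 - ε / 4)) := by
  rcases subsingleton_or_nontrivial Ω with hΩ | hΩ
  · have hzero : ∀ δ : ℝ, 0 ≤ δ → contMix P pi δ = 0 := fun _ =>
      contMix_eq_zero_of_subsingleton P h.1.2.2.1
    rw [aveMix_eq_zero_of_subsingleton h.1.1 h.1.2.2.1 hε.le, hzero (1 / 4) (by norm_num),
      hzero (ε / 4) (by linarith), hzero (1 - ε / 4) (by linarith), Nat.cast_zero, sub_self,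
      mul_zero, add_zero]
  · obtain ⟨m, hm, hm_le⟩ := h.exists_aveDistMax_le hε hε'
    have hmix : (aveMix P pi ε : ℝ) ≤ m := by exact_mod_cast aveMix_le hm
    have hmono : contMix P pi (1 - ε / 4) ≤ contMix P pi (1 / 4) :=
      h.1.contMix_anti (by norm_num) (by linarith)
    have hwindow := mul_le_mul_of_nonneg_left
      (h.1.sqrt_contMix_add_one_le (η := ε / 4) (by linarith) (by linarith))
      (by positivity : 0 ≤ 100 / ε ^ 2)
    linear_combination hmix + hm_le + hwindow + hmono

theorem IsRevMC.contMix_le_aveMix_add (h : IsRevMC P pi) (hε : 0 < ε) (hε' : ε < 1) :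
    contMix P pi (1 / 4) ≤ aveMix P pi (1 - ε) +
      (1 + 32 / ε ^ 2) * (contMix P pi (ε / 4) - contMix P pi (1 - ε / 4)) := by
  have hanti : contMix P pi (1 - ε / 4) ≤ contMix P pi (ε / 4) :=
    h.1.contMix_anti (by linarith) (by linarith)
  rcases le_total (contMix P pi (1 / 4)) (aveMix P pi (1 - ε)) with hle | hge
  · exact hle.trans (le_add_of_nonneg_right (mul_nonneg (by positivity) (sub_nonneg.2 hanti)))
  rcases subsingleton_or_nontrivial Ω with hΩ | hΩ
  · rw [contMix_eq_zero_of_subsingleton P h.1.2.2.1 (by norm_num)]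
    exact add_nonneg (Nat.cast_nonneg _) (mul_nonneg (by positivity) (sub_nonneg.2 hanti))
  · have hright : contMix P pi (1 / 4) ≤ contMix P pi (ε / 4) :=
      h.1.contMix_anti (by linarith) (by linarith)
    have hleft : contMix P pi (1 - ε / 4) ≤ contMix P pi (1 - ε / 2) :=
      h.1.contMix_anti (by linarith) (by linarith)
    have hcont := contMix_one_sub_half_le h.1.1 h.1.2.2.1 hε hε'.le
      (h.aveDistMax_aveMix_le (ε := 1 - ε) (by linarith) (by linarith))
    have hwindow := mul_le_mul_of_nonneg_left
      ((add_le_add_left (Real.sqrt_le_sqrt (hge.trans hright)) 1).trans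
        (h.1.sqrt_contMix_add_one_le (η := ε / 4) (by linarith) (by linarith)))
      (by positivity : 0 ≤ 4 / ε ^ 2)
    linear_combination hcont + hwindow + hleft + hright

end MixingTimes

section Sequences

variable {Ω : ℕ → Type} [∀ n, Fintype (Ω n)] [∀ n, DecidableEq (Ω n)]
  {P : ∀ n, Matrix (Ω n) (Ω n) ℝ} {pi : ∀ n, Ω n → ℝ} {w : ℕ → ℝ} {ε : ℝ}

theorem ContCutoffWindow.exists_aveMix_sub_contMix_le (h : ContCutoffWindow P pi w)
    (hrev : ∀ n, IsRevMC (P n) (pi n)) (hε : 0 < ε) (hε' : ε ≤ 1) :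
    ∃ K : ℝ, 0 < K ∧ ∀ n, aveMix (P n) (pi n) ε - contMix (P n) (pi n) (1 / 4) ≤ K * w n := by
  obtain ⟨C, hC, hwindow⟩ := h.2.2 (ε / 4) (by linarith) (by linarith)
  refine ⟨(1 + 800 / ε ^ 2) * C, by positivity, fun n => ?_⟩
  rw [mul_assoc, sub_le_iff_le_add']
  refine ((hrev n).aveMix_le_contMix_add hε hε').trans ?_
  gcongr
  exact hwindow n

theorem ContCutoffWindow.exists_contMix_sub_aveMix_le (h : ContCutoffWindow P pi w)
    (hrev : ∀ n, IsRevMC (P n) (pi n)) (hε : 0 < ε) (hε' : ε < 1) :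
    ∃ K : ℝ, 0 < K ∧
      ∀ n, contMix (P n) (pi n) (1 / 4) - aveMix (P n) (pi n) (1 - ε) ≤ K * w n := by
  obtain ⟨C, hC, hwindow⟩ := h.2.2 (ε / 4) (by linarith) (by linarith)
  refine ⟨(1 + 32 / ε ^ 2) * C, by positivity, fun n => ?_⟩
  rw [mul_assoc, sub_le_iff_le_add']
  refine ((hrev n).contMix_le_aveMix_add hε hε').trans ?_
  gcongr
  exact hwindow n

theorem ContCutoffWindow.aveMix_isEquivalent (h : ContCutoffWindow P pi w)
    (hrev : ∀ n, IsRevMC (P n) (pi n)) (hε : 0 < ε) (hε' : ε < 1) :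
    (fun n => (aveMix (P n) (pi n) ε : ℝ)) ~[atTop]
      fun n => contMix (P n) (pi n) (1 / 4) := by
  obtain ⟨K, hK, hupper⟩ := h.exists_aveMix_sub_contMix_le hrev hε hε'.le
  obtain ⟨L, hL, hlower⟩ := h.exists_contMix_sub_aveMix_le (ε := 1 - ε) hrev
    (by linarith) (by linarith)
  rw [sub_sub_cancel] at hlower
  refine IsBigO.trans_isLittleO (IsBigO.of_bound (max K L) (Eventually.of_forall fun n => ?_)) h.2.1
  rw [Real.norm_eq_abs, Real.norm_eq_abs, Pi.sub_apply, abs_sub_le_iff]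
  constructor
  · exact (hupper n).trans <| (mul_le_mul_of_nonneg_left (le_abs_self _) hK.le).trans <|
      mul_le_mul_of_nonneg_right (le_max_left K L) (abs_nonneg _)
  · exact (hlower n).trans <| (mul_le_mul_of_nonneg_left (le_abs_self _) hL.le).trans <|
      mul_le_mul_of_nonneg_right (le_max_right K L) (abs_nonneg _)

theorem ContCutoff.eventually_contMix_ne_zero (h : ContCutoff P pi) (hε : 0 < ε) (hε' : ε < 1) :
    ∀ᶠ n in atTop, contMix (P n) (pi n) ε ≠ 0 := by
  filter_upwards [(h ε hε hε').eventually_ne one_ne_zero] with n hn hzero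
  rw [hzero, zero_div] at hn
  exact hn rfl

theorem ContCutoffWindow.aveCutoff (h : ContCutoffWindow P pi w)
    (hrev : ∀ n, IsRevMC (P n) (pi n)) : AveCutoff P pi := fun ε hε hε' => by
  have hleft := h.aveMix_isEquivalent (ε := 1 - ε) hrev (by linarith) (by linarith)
  refine (isEquivalent_iff_tendsto_one ?_).1 ((h.aveMix_isEquivalent hrev hε hε').trans hleft.symm)
  obtain ⟨φ, -, hφ⟩ := hleft.symm.exists_eq_mul
  filter_upwards [h.1.eventually_contMix_ne_zero (ε := 1 / 4) (by norm_num) (by norm_num), hφ]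
    with n hne hmul hzero
  exact hne (by rw [hmul, Pi.mul_apply, hzero, mul_zero])

end Sequences

/-- **Theorem 3 (i) of Hermon–Peres.**
If a sequence of finite irreducible reversible Markov chains exhibits a continuous-time
cutoff with window `w`, then it exhibits an averaged cutoff with the same window `w`. -/
theorem aveCutoffWindow_of_contCutoffWindow :
    ∀ (Ω : ℕ → Type) [∀ n, Fintype (Ω n)] [∀ n, DecidableEq (Ω n)] [∀ n, Nonempty (Ω n)]
      (P : ∀ n, Matrix (Ω n) (Ω n) ℝ) (pi : ∀ n, Ω n → ℝ) (w : ℕ → ℝ),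
      (∀ n, IsRevMC (P n) (pi n)) →
      ContCutoffWindow P pi w → AveCutoffWindow P pi w := by
  intro Ω _ _ _ P pi w hrev h
  have hquarter := h.aveMix_isEquivalent (ε := 1 / 4) hrev (by norm_num) (by norm_num)
  refine ⟨h.aveCutoff hrev, h.2.1.trans_isBigO hquarter.isBigO_symm, fun ε hε hε' => ?_⟩
  obtain ⟨K, hK, hupper⟩ := h.exists_aveMix_sub_contMix_le hrev hε (by linarith)
  obtain ⟨L, hL, hlower⟩ := h.exists_contMix_sub_aveMix_le hrev hε (by linarith)
  exact ⟨K + L, add_pos hK hL, fun n => by linear_combination hupper n + hlower n⟩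
end

section
/- There exists an absolute constant C such that for every finite irreducible reversible Markov chain (Ω,P,π) and every function f : Ω → ℝ: E_π[ sup_{t ≥ 0} (t+1)² · |(P_L^{t+1} f − P_L^t f)(x)|² ] ≤ C · Var_π(f), where P_L = (I+P)/2 and the supremum is over integers t ≥ 0. -/
open Matrix Filter Asymptotics

/-!
Let `D_t = Q^t (1 - Q) f` with `Q = P_L`. Stein's argument bounds `(t + 1)² D_t²` pointwise, by
telescoping, in terms of the square functions `∑ (t + 1) D_t²` and `∑ (t + 1)³ (D_t - D_{t+1})²`,
which do not depend on `t`. Reversibility and laziness make `Q` self-adjoint in `L²(π)` with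
`0 ≤ Q ≤ 1`, so the numbers `⟪f, Q^n (1 - Q)^k f⟫` behave like the Hausdorff moments
`∫ λ^n (1 - λ)^k dμ(λ)` of a measure of mass `‖f‖²` on `[0, 1]`. Summation by parts gives
`∑ₙ (n + k).choose k * ⟪f, Q^n (1 - Q)^(k + 1) f⟫ ≤ ‖f‖²`. Since
`‖Q^t (1 - Q)^j f‖² = ⟪f, Q^(2t) (1 - Q)^(2j) f⟫`, the even `n` in the cases `k = 1` and `k = 3`
bound the expectations of the square functions.
-/

section HausdorffMoments

variable {A : Type*} [AddCommMonoid A] {M : ℕ → ℕ → A}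

lemma sum_choose_succ_nsmul_add (hM : ∀ n k, M n k = M (n + 1) k + M n (k + 1)) (k N : ℕ) :
    ∑ n ∈ Finset.range N, (n + k + 1).choose (k + 1) • M n (k + 2)
        + (N + k).choose (k + 1) • M N (k + 1) =
      ∑ n ∈ Finset.range N, (n + k).choose k • M n (k + 1) := by
  induction N with
  | zero => simp
  | succ N ih =>
    calc ∑ n ∈ Finset.range (N + 1), (n + k + 1).choose (k + 1) • M n (k + 2)
            + (N + 1 + k).choose (k + 1) • M (N + 1) (k + 1)
        = ∑ n ∈ Finset.range N, (n + k + 1).choose (k + 1) • M n (k + 2)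
            + (N + k + 1).choose (k + 1) • M N (k + 1) := by
          rw [Finset.sum_range_succ, hM N (k + 1), smul_add, Nat.add_right_comm N 1 k]
          abel
      _ = ∑ n ∈ Finset.range N, (n + k).choose k • M n (k + 1)
            + (N + k).choose k • M N (k + 1) := by
          rw [Nat.choose_succ_succ, add_smul, ← ih]
          abel
      _ = ∑ n ∈ Finset.range (N + 1), (n + k).choose k • M n (k + 1) :=
          (Finset.sum_range_succ _ N).symm

lemma sum_range_add_eq_apply_zero_zero (hM : ∀ n k, M n k = M (n + 1) k + M n (k + 1)) (N : ℕ) :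
    ∑ n ∈ Finset.range N, M n 1 + M N 0 = M 0 0 := by
  induction N with
  | zero => simp
  | succ N ih => rw [← ih, Finset.sum_range_succ, hM N 0]; abel

lemma sum_choose_nsmul_le_apply_zero_zero [PartialOrder A] [IsOrderedAddMonoid A]
    (hM : ∀ n k, M n k = M (n + 1) k + M n (k + 1)) (hM₀ : ∀ n k, 0 ≤ M n k) (k N : ℕ) :
    ∑ n ∈ Finset.range N, (n + k).choose k • M n (k + 1) ≤ M 0 0 := by
  induction k with
  | zero =>
    simpa using (le_add_of_nonneg_right (hM₀ N 0)).trans_eq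
      (sum_range_add_eq_apply_zero_zero hM N)
  | succ k ih =>
    calc ∑ n ∈ Finset.range N, (n + (k + 1)).choose (k + 1) • M n (k + 2)
        ≤ ∑ n ∈ Finset.range N, (n + k + 1).choose (k + 1) • M n (k + 2)
            + (N + k).choose (k + 1) • M N (k + 1) :=
          le_add_of_nonneg_right (nsmul_nonneg (hM₀ N (k + 1)) _)
      _ = ∑ n ∈ Finset.range N, (n + k).choose k • M n (k + 1) := sum_choose_succ_nsmul_add hM k N
      _ ≤ M 0 0 := ih

end HausdorffMoments

/-- `Q` is self-adjoint for the bilinear form `B` and `0 ≤ Q ≤ 1` in the sense of quadratic forms;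
in particular `B` itself is positive semidefinite. -/
structure IsPositiveContraction {R V : Type*} [CommRing R] [LE R] [AddCommGroup V] [Module R V]
    (B : LinearMap.BilinForm R V) (Q : Module.End R V) : Prop where
  isSelfAdjoint : B.IsSelfAdjoint Q
  nonneg : ∀ f, 0 ≤ B f (Q f)
  le : ∀ f, B f (Q f) ≤ B f f

lemma pow_mul_one_sub_pow_eq_add {A : Type*} [Ring A] (a : A) (n k : ℕ) :
    a ^ n * (1 - a) ^ k = a ^ (n + 1) * (1 - a) ^ k + a ^ n * (1 - a) ^ (k + 1) := by
  rw [pow_succ a, pow_succ' (1 - a), mul_assoc, ← mul_add, ← add_mul, add_sub_cancel, one_mul]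

lemma isSelfAdjoint_pow {R V : Type*} [CommRing R] [AddCommGroup V] [Module R V]
    {B : LinearMap.BilinForm R V} {T : Module.End R V} (hT : B.IsSelfAdjoint T) (n : ℕ) :
    B.IsSelfAdjoint (T ^ n : Module.End R V) := by
  induction n with
  | zero => exact LinearMap.isAdjointPair_one
  | succ n ih => simpa only [LinearMap.IsSelfAdjoint, ← pow_succ, ← pow_succ'] using ih.mul hT

namespace IsPositiveContraction

variable {R V : Type*} [CommRing R] [PartialOrder R] [AddCommGroup V] [Module R V]
  {B : LinearMap.BilinForm R V} {Q : Module.End R V}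

lemma apply_self_nonneg (hQ : IsPositiveContraction B Q) (f : V) : 0 ≤ B f f :=
  (hQ.nonneg f).trans (hQ.le f)

lemma isSelfAdjoint_one_sub (hQ : IsPositiveContraction B Q) :
    B.IsSelfAdjoint (1 - Q : Module.End R V) :=
  LinearMap.isAdjointPair_one.sub hQ.isSelfAdjoint

lemma apply_pow_mul_one_sub_pow_mul (hQ : IsPositiveContraction B Q) {T : Module.End R V}
    (hT : Commute T Q) (f : V) (n k : ℕ) :
    B ((Q ^ n * (1 - Q) ^ k) f) (T ((Q ^ n * (1 - Q) ^ k) f)) =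
      B f ((Q ^ (2 * n) * (1 - Q) ^ (2 * k) * T) f) := by
  have hcomm : Commute (Q ^ n) ((1 - Q) ^ k) :=
    ((Commute.one_right Q).sub_right (Commute.refl Q)).pow_pow n k
  have hTcomm : Commute T (Q ^ n * (1 - Q) ^ k) :=
    (hT.pow_right n).mul_right (((Commute.one_right T).sub_right hT).pow_right k)
  have hadj := (isSelfAdjoint_pow hQ.isSelfAdjoint n).mul
    (isSelfAdjoint_pow hQ.isSelfAdjoint_one_sub k)
  calc B ((Q ^ n * (1 - Q) ^ k) f) (T ((Q ^ n * (1 - Q) ^ k) f))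
      = B f (((1 - Q) ^ k * Q ^ n * (T * (Q ^ n * (1 - Q) ^ k))) f) := hadj f _
    _ = B f ((Q ^ (2 * n) * (1 - Q) ^ (2 * k) * T) f) := by
      rw [hTcomm.eq, ← mul_assoc, ← hcomm.eq, hcomm.symm.mul_mul_mul_comm, two_mul, two_mul,
        pow_add, pow_add]

variable [IsOrderedAddMonoid R]

lemma apply_pow_mul_one_sub_pow_nonneg (hQ : IsPositiveContraction B Q) (f : V) (n k : ℕ) :
    0 ≤ B f ((Q ^ n * (1 - Q) ^ k) f) := by
  have hQQ : Commute Q Q := Commute.refl Q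
  have hPQ : Commute (1 - Q) Q := (Commute.one_left Q).sub_left hQQ
  have hP (g : V) : 0 ≤ B g ((1 - Q) g) := by simpa [sub_nonneg] using hQ.le g
  have even_even (n k : ℕ) : 0 ≤ B f ((Q ^ (2 * n) * (1 - Q) ^ (2 * k)) f) := by
    simpa using (hQ.apply_self_nonneg _).trans_eq
      (hQ.apply_pow_mul_one_sub_pow_mul (Commute.one_left Q) f n k)
  have odd_even (n k : ℕ) : 0 ≤ B f ((Q ^ (2 * n + 1) * (1 - Q) ^ (2 * k)) f) := by
    rw [pow_succ, mul_assoc, (hPQ.pow_left (2 * k)).symm.eq, ← mul_assoc,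
      ← hQ.apply_pow_mul_one_sub_pow_mul hQQ]
    exact hQ.nonneg _
  have even_odd (n k : ℕ) : 0 ≤ B f ((Q ^ (2 * n) * (1 - Q) ^ (2 * k + 1)) f) := by
    rw [pow_succ, ← mul_assoc, ← hQ.apply_pow_mul_one_sub_pow_mul hPQ]
    exact hP _
  obtain ⟨a, rfl | rfl⟩ := n.even_or_odd' <;> obtain ⟨b, rfl | rfl⟩ := k.even_or_odd'
  · exact even_even a b
  · exact even_odd a b
  · exact odd_even a b
  · rw [pow_mul_one_sub_pow_eq_add, LinearMap.add_apply, map_add]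
    exact add_nonneg (even_odd (a + 1) b) (odd_even a (b + 1))

theorem sum_choose_nsmul_apply_le (hQ : IsPositiveContraction B Q) (f : V) (k N : ℕ) :
    ∑ n ∈ Finset.range N, (n + k).choose k • B f ((Q ^ n * (1 - Q) ^ (k + 1)) f) ≤ B f f :=
  sum_choose_nsmul_le_apply_zero_zero (M := fun n k ↦ B f ((Q ^ n * (1 - Q) ^ k) f))
    (fun n k ↦ by rw [pow_mul_one_sub_pow_eq_add, LinearMap.add_apply, map_add])
    (hQ.apply_pow_mul_one_sub_pow_nonneg f) k N

theorem sum_choose_nsmul_apply_self_le (hQ : IsPositiveContraction B Q) (f : V) (k K : ℕ) :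
    ∑ t ∈ Finset.range K, (2 * t + (2 * k + 1)).choose (2 * k + 1) •
      B ((Q ^ t * (1 - Q) ^ (k + 1)) f) ((Q ^ t * (1 - Q) ^ (k + 1)) f) ≤ B f f := by
  let F (n : ℕ) : R :=
    (n + (2 * k + 1)).choose (2 * k + 1) • B f ((Q ^ n * (1 - Q) ^ (2 * (k + 1))) f)
  calc ∑ t ∈ Finset.range K, (2 * t + (2 * k + 1)).choose (2 * k + 1) •
        B ((Q ^ t * (1 - Q) ^ (k + 1)) f) ((Q ^ t * (1 - Q) ^ (k + 1)) f)
      = ∑ t ∈ Finset.range K, F (2 * t) := Finset.sum_congr rfl fun t _ ↦ by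
        simpa [F] using congr_arg _
          (hQ.apply_pow_mul_one_sub_pow_mul (Commute.one_left Q) f t (k + 1))
    _ = ∑ n ∈ (Finset.range K).image (2 * ·), F n :=
      (Finset.sum_image (mul_right_injective₀ two_ne_zero).injOn).symm
    _ ≤ ∑ n ∈ Finset.range (2 * K), F n := Finset.sum_le_sum_of_subset_of_nonneg
        (Finset.image_subset_iff.2 fun t ht ↦ by simpa using ht)
        fun n _ _ ↦ nsmul_nonneg (hQ.apply_pow_mul_one_sub_pow_nonneg f _ _) _
    _ ≤ B f f := hQ.sum_choose_nsmul_apply_le f (2 * k + 1) (2 * K)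

end IsPositiveContraction

lemma add_one_pow_three_le_choose (t : ℕ) : (t + 1) ^ 3 ≤ (2 * t + 3).choose 3 := by
  have six_mul_choose : 6 * (2 * t + 3).choose 3 = (2 * t + 1) * (2 * t + 2) * (2 * t + 3) := by
    simpa [Nat.descFactorial, Nat.factorial, mul_assoc] using
      (Nat.descFactorial_eq_factorial_mul_choose (2 * t + 3) 3).symm
  nlinarith [Nat.zero_le (t ^ 3), Nat.zero_le (t ^ 2)]

namespace IsPositiveContraction

variable {V : Type*} [AddCommGroup V] [Module ℝ V] {B : LinearMap.BilinForm ℝ V}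
  {Q : Module.End ℝ V}

lemma sum_mul_apply_self_le (hQ : IsPositiveContraction B Q) (f : V) (K : ℕ) :
    ∑ t ∈ Finset.range K, ((t : ℝ) + 1) *
      B ((Q ^ t * (1 - Q)) f) ((Q ^ t * (1 - Q)) f) ≤ B f f := by
  refine le_trans (Finset.sum_le_sum fun t _ ↦ ?_) (hQ.sum_choose_nsmul_apply_self_le f 0 K)
  simp only [mul_zero, zero_add, Nat.choose_one_right, pow_one, nsmul_eq_mul]
  refine mul_le_mul_of_nonneg_right ?_ (hQ.apply_self_nonneg _)
  push_cast
  linarith [(t.cast_nonneg : (0 : ℝ) ≤ t)]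

lemma sum_pow_three_mul_apply_self_le (hQ : IsPositiveContraction B Q) (f : V) (K : ℕ) :
    ∑ t ∈ Finset.range K, ((t : ℝ) + 1) ^ 3 *
      B ((Q ^ t * (1 - Q) ^ 2 : Module.End ℝ V) f) ((Q ^ t * (1 - Q) ^ 2 : Module.End ℝ V) f) ≤
        B f f := by
  refine le_trans (Finset.sum_le_sum fun t _ ↦ ?_) (hQ.sum_choose_nsmul_apply_self_le f 1 K)
  rw [nsmul_eq_mul]
  refine mul_le_mul_of_nonneg_right ?_ (hQ.apply_self_nonneg _)
  exact_mod_cast add_one_pow_three_le_choose t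

end IsPositiveContraction

lemma sq_mul_sq_succ_le {t : ℝ} (ht : 0 ≤ t) (a b : ℝ) :
    (t + 1 + 1) ^ 2 * b ^ 2 ≤
      (t + 1) ^ 2 * a ^ 2 + ((t + 1) ^ 3 * (a - b) ^ 2 + 3 * ((t + 1 + 1) * b ^ 2)) := by
  have amgm : (t + 1) ^ 2 * (2 * b * (b - a)) ≤ (t + 1) ^ 3 * (a - b) ^ 2 + (t + 1) * b ^ 2 := by
    linarith [show 0 ≤ (t + 1) * ((t + 1) * (a - b) + b) ^ 2 by positivity]
  calc (t + 1 + 1) ^ 2 * b ^ 2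
      = (t + 1) ^ 2 * a ^ 2 + (t + 1) ^ 2 * (2 * b * (b - a)) + (2 * t + 3) * b ^ 2
          - (t + 1) ^ 2 * (a - b) ^ 2 := by ring
    _ ≤ (t + 1) ^ 2 * a ^ 2 + ((t + 1) ^ 3 * (a - b) ^ 2 + 3 * ((t + 1 + 1) * b ^ 2)) := by
      linarith [sq_nonneg b, show 0 ≤ (t + 1) ^ 2 * (a - b) ^ 2 by positivity]

lemma sq_mul_sq_le_sum_range (a : ℕ → ℝ) (n : ℕ) :
    ((n : ℝ) + 1) ^ 2 * a n ^ 2 ≤ ∑ k ∈ Finset.range (n + 1),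
      ((k + 1) ^ 3 * (a k - a (k + 1)) ^ 2 + 3 * ((k + 1) * a k ^ 2)) := by
  have telescoped : ((n : ℝ) + 1) ^ 2 * a n ^ 2 ≤
      ∑ k ∈ Finset.range n, ((k : ℝ) + 1) ^ 3 * (a k - a (k + 1)) ^ 2
        + ∑ k ∈ Finset.range (n + 1), 3 * (((k : ℝ) + 1) * a k ^ 2) := by
    induction n with
    | zero => norm_num; nlinarith [sq_nonneg (a 0)]
    | succ n ih =>
      rw [Finset.sum_range_succ, Finset.sum_range_succ _ (n + 1)]
      have := sq_mul_sq_succ_le n.cast_nonneg (a n) (a (n + 1))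
      push_cast
      linarith
  rw [Finset.sum_add_distrib]
  exact telescoped.trans (add_le_add_left (Finset.sum_le_sum_of_subset_of_nonneg
    (Finset.range_mono n.le_succ) fun k _ _ ↦ by positivity) _)

lemma sum_mul_iSup_le_of_le_sum_range {ι : Type*} {s : Finset ι} {w : ι → ℝ} (hw : ∀ x, 0 ≤ w x)
    {a G : ℕ → ι → ℝ} (hG : ∀ n x, 0 ≤ G n x)
    (ha : ∀ n x, a n x ≤ ∑ k ∈ Finset.range (n + 1), G k x) {c : ℝ}
    (hc : ∀ K, ∑ k ∈ Finset.range K, ∑ x ∈ s, w x * G k x ≤ c) :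
    ∑ x ∈ s, w x * ⨆ n, a n x ≤ c := by
  have hwG (k : ℕ) (x : ι) : 0 ≤ w x * G k x := mul_nonneg (hw x) (hG k x)
  have hsum (x : ι) (hx : x ∈ s) : Summable fun k ↦ w x * G k x :=
    summable_of_sum_range_le (fun k ↦ hwG k x) fun K ↦ (Finset.sum_le_sum fun k _ ↦
      Finset.single_le_sum (f := fun x ↦ w x * G k x) (fun y _ ↦ hwG k y) hx).trans (hc K)
  calc ∑ x ∈ s, w x * ⨆ n, a n x
      ≤ ∑ x ∈ s, ∑' k, w x * G k x := Finset.sum_le_sum fun x hx ↦ by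
        rw [Real.mul_iSup_of_nonneg (hw x)]
        refine ciSup_le fun n ↦ ?_
        calc w x * a n x ≤ ∑ k ∈ Finset.range (n + 1), w x * G k x := by
              rw [← Finset.mul_sum]
              exact mul_le_mul_of_nonneg_left (ha n x) (hw x)
          _ ≤ ∑' k, w x * G k x := (hsum x hx).sum_le_tsum _ fun k _ ↦ hwG k x
    _ = ∑' k, ∑ x ∈ s, w x * G k x := (Summable.tsum_finsetSum hsum).symm
    _ ≤ c := Real.tsum_le_of_sum_range_le (fun k ↦ Finset.sum_nonneg fun x _ ↦ hwG k x) hc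

section WeightedInner

variable {Ω : Type*} [Fintype Ω] [DecidableEq Ω]

/-- The inner product `∑ x, π x * f x * g x` of `L²(π)`; it may be degenerate, as `π` is allowed to
vanish. -/
noncomputable def weightedInner (π : Ω → ℝ) : LinearMap.BilinForm ℝ (Ω → ℝ) :=
  Matrix.toBilin' (Matrix.diagonal π)

lemma weightedInner_apply (π f g : Ω → ℝ) : weightedInner π f g = ∑ x, π x * (f x * g x) := by
  simp only [weightedInner, Matrix.toBilin'_apply', dotProduct, Matrix.mulVec_diagonal]
  exact Finset.sum_congr rfl fun x _ ↦ by ring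

lemma weightedInner_self (π f : Ω → ℝ) : weightedInner π f f = ∑ x, π x * f x ^ 2 := by
  simp only [weightedInner_apply, sq]

theorem IsPositiveContraction.sum_mul_iSup_sq_sub_le {π : Ω → ℝ} {Q : Module.End ℝ (Ω → ℝ)}
    (hQ : IsPositiveContraction (weightedInner π) Q) (hπ : ∀ x, 0 ≤ π x) (f : Ω → ℝ) :
    ∑ x, π x * ⨆ t : ℕ, ((t : ℝ) + 1) ^ 2 * |(Q ^ (t + 1)) f x - (Q ^ t) f x| ^ 2 ≤
      4 * weightedInner π f f := by
  let D (t : ℕ) : Ω → ℝ := (Q ^ t * (1 - Q)) f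
  let D' (t : ℕ) : Ω → ℝ := (Q ^ t * (1 - Q) ^ 2 : Module.End ℝ (Ω → ℝ)) f
  have hD (t : ℕ) (x : Ω) : |(Q ^ (t + 1)) f x - (Q ^ t) f x| ^ 2 = D t x ^ 2 := by
    rw [abs_sub_comm, sq_abs]
    simp [D, pow_succ]
  have hD' (t : ℕ) (x : Ω) : D t x - D (t + 1) x = D' t x := by
    have := LinearMap.congr_fun (pow_mul_one_sub_pow_eq_add Q t 1) f
    rw [pow_one] at this
    exact sub_eq_of_eq_add' (congr_fun this x)
  refine sum_mul_iSup_le_of_le_sum_range hπ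
    (G := fun t x ↦ (t + 1) ^ 3 * D' t x ^ 2 + 3 * ((t + 1) * D t x ^ 2))
    (fun t x ↦ by positivity) (fun t x ↦ ?_) (fun K ↦ ?_)
  · simpa only [hD, ← hD'] using sq_mul_sq_le_sum_range (D · x) t
  · calc ∑ t ∈ Finset.range K,
          ∑ x, π x * ((t + 1) ^ 3 * D' t x ^ 2 + 3 * ((t + 1) * D t x ^ 2))
        = ∑ t ∈ Finset.range K, ((t : ℝ) + 1) ^ 3 * weightedInner π (D' t) (D' t)
          + 3 * ∑ t ∈ Finset.range K, ((t : ℝ) + 1) * weightedInner π (D t) (D t) := by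
          simp only [weightedInner_self, Finset.mul_sum, ← Finset.sum_add_distrib]
          exact Finset.sum_congr rfl fun t _ ↦ Finset.sum_congr rfl fun x _ ↦ by ring
      _ ≤ 4 * weightedInner π f f := by
          linarith [hQ.sum_mul_apply_self_le f K, hQ.sum_pow_three_mul_apply_self_le f K]

end WeightedInner

section LazyChain

variable {Ω : Type*} [Fintype Ω] [DecidableEq Ω] {P : Matrix Ω Ω ℝ} {π : Ω → ℝ}

lemma IsReversible.isSelfAdjoint_toLin' (h : IsReversible P π) :
    (weightedInner π).IsSelfAdjoint (Matrix.toLin' P) := by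
  intro f g
  simp only [weightedInner_apply, Matrix.toLin'_apply, Matrix.mulVec, dotProduct, Finset.mul_sum,
    Finset.sum_mul]
  rw [Finset.sum_comm]
  exact Finset.sum_congr rfl fun y _ ↦ Finset.sum_congr rfl fun x _ ↦ by
    linear_combination f y * g x * h x y

lemma IsReversible.sum_mul_add_mul_sq (h : IsReversible P π) (hP : IsStochastic P) (f : Ω → ℝ)
    (a : ℝ) :
    ∑ x, ∑ y, π x * P x y * (f x + a * f y) ^ 2 =
      (1 + a ^ 2) * weightedInner π f f + 2 * a * weightedInner π f (P *ᵥ f) := by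
  have diag : ∑ x, ∑ y, π x * P x y * f x ^ 2 = weightedInner π f f := by
    simp only [weightedInner_self, ← Finset.sum_mul, ← Finset.mul_sum, hP.2, mul_one]
  have diag' : ∑ x, ∑ y, π x * P x y * f y ^ 2 = weightedInner π f f := by
    rw [Finset.sum_comm, ← diag]
    simp only [h _ _]
  have cross : ∑ x, ∑ y, π x * P x y * (f x * f y) = weightedInner π f (P *ᵥ f) := by
    simp only [weightedInner_apply, Matrix.mulVec, dotProduct, Finset.mul_sum]
    exact Finset.sum_congr rfl fun x _ ↦ Finset.sum_congr rfl fun y _ ↦ by ring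
  rw [add_mul, one_mul]
  nth_rewrite 1 [← diag]
  rw [← diag', ← cross]
  simp only [Finset.mul_sum, ← Finset.sum_add_distrib]
  exact Finset.sum_congr rfl fun x _ ↦ Finset.sum_congr rfl fun y _ ↦ by ring

lemma IsReversible.abs_weightedInner_mulVec_le (h : IsReversible P π) (hP : IsStochastic P)
    (hπ : ∀ x, 0 ≤ π x) (f : Ω → ℝ) :
    |weightedInner π f (P *ᵥ f)| ≤ weightedInner π f f := by
  have nonneg (a : ℝ) :
      0 ≤ (1 + a ^ 2) * weightedInner π f f + 2 * a * weightedInner π f (P *ᵥ f) := by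
    rw [← h.sum_mul_add_mul_sq hP]
    exact Finset.sum_nonneg fun x _ ↦ Finset.sum_nonneg fun y _ ↦
      mul_nonneg (mul_nonneg (hπ x) (hP.1 x y)) (sq_nonneg _)
  exact abs_le.2 ⟨by linarith [nonneg 1], by linarith [nonneg (-1)]⟩

lemma lazyM_mulVec (P : Matrix Ω Ω ℝ) (f : Ω → ℝ) :
    lazyM P *ᵥ f = (2 : ℝ)⁻¹ • (f + P *ᵥ f) := by
  rw [lazyM, Matrix.smul_mulVec, Matrix.add_mulVec, Matrix.one_mulVec]

lemma IsReversible.isReversible_lazyM (h : IsReversible P π) : IsReversible (lazyM P) π := by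
  intro x y
  rcases eq_or_ne x y with rfl | hxy
  · rfl
  · simp only [lazyM, Matrix.smul_apply, Matrix.add_apply, Matrix.one_apply_ne hxy,
      Matrix.one_apply_ne hxy.symm, smul_eq_mul]
    linear_combination 2⁻¹ * h x y

lemma IsReversible.isPositiveContraction_lazyM (h : IsReversible P π) (hP : IsStochastic P)
    (hπ : ∀ x, 0 ≤ π x) :
    IsPositiveContraction (weightedInner π) (Matrix.toLin' (lazyM P)) where
  isSelfAdjoint := h.isReversible_lazyM.isSelfAdjoint_toLin'
  nonneg f := by
    have := (abs_le.1 (h.abs_weightedInner_mulVec_le hP hπ f)).1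
    simp only [Matrix.toLin'_apply, lazyM_mulVec, map_smul, map_add, smul_eq_mul]
    linarith
  le f := by
    have := (abs_le.1 (h.abs_weightedInner_mulVec_le hP hπ f)).2
    simp only [Matrix.toLin'_apply, lazyM_mulVec, map_smul, map_add, smul_eq_mul]
    linarith

lemma IsStochastic.lazyM_mem_rowStochastic (hP : IsStochastic P) :
    lazyM P ∈ Matrix.rowStochastic ℝ Ω := by
  have := Matrix.convex_rowStochastic (one_mem (Matrix.rowStochastic ℝ Ω))
    (Matrix.mem_rowStochastic_iff_sum.2 hP) (a := 2⁻¹) (b := 2⁻¹) (by norm_num) (by norm_num)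
    (by norm_num)
  rwa [lazyM, smul_add]

lemma mulVec_sub_const_of_mem_rowStochastic {M : Matrix Ω Ω ℝ}
    (hM : M ∈ Matrix.rowStochastic ℝ Ω) (f : Ω → ℝ) (c : ℝ) (x : Ω) :
    (M *ᵥ (fun y ↦ f y - c)) x = (M *ᵥ f) x - c := by
  simp [Matrix.mulVec, dotProduct, mul_sub, ← Finset.sum_mul,
    Matrix.sum_row_of_mem_rowStochastic hM]

end LazyChain

theorem maximal_inequality_lazy_general {Ω : Type*} [Fintype Ω] [DecidableEq Ω]
    {P : Matrix Ω Ω ℝ} {pi : Ω → ℝ} (hP : IsStochastic P) (hpi : ∀ x, 0 ≤ pi x)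
    (hrev : IsReversible P pi) (f : Ω → ℝ) (c : ℝ) :
    ∑ x, pi x *
        (⨆ t : ℕ, ((t : ℝ) + 1) ^ 2 *
          |((lazyM P ^ (t + 1)) *ᵥ f) x - ((lazyM P ^ t) *ᵥ f) x| ^ 2) ≤
      4 * ∑ x, pi x * (f x - c) ^ 2 := by
  have h := (hrev.isPositiveContraction_lazyM hP hpi).sum_mul_iSup_sq_sub_le hpi (fun x ↦ f x - c)
  have shift (t : ℕ) (x : Ω) :
      (lazyM P ^ t *ᵥ (fun y ↦ f y - c)) x = (lazyM P ^ t *ᵥ f) x - c :=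
    mulVec_sub_const_of_mem_rowStochastic (pow_mem hP.lazyM_mem_rowStochastic t) f c x
  simpa only [← Matrix.toLin'_pow, Matrix.toLin'_apply, shift, sub_sub_sub_cancel_right,
    weightedInner_self] using h

/-- **Corollary 2.3 of Hermon–Peres, first inequality (Stein's maximal inequality for the
lazy chain).** There is an absolute constant `C` such that for every finite irreducible
reversible Markov chain and every `f : Ω → ℝ`,
`E_π[sup_{t ≥ 0} (t+1)² |Δ P_L^t f|²] ≤ C Var_π f`. -/
theorem maximal_inequality_lazy :
    ∃ C : ℝ, 0 < C ∧
      ∀ (Ω : Type) [Fintype Ω] [DecidableEq Ω]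
        (P : Matrix Ω Ω ℝ) (pi : Ω → ℝ), IsRevMC P pi →
        ∀ f : Ω → ℝ,
          ∑ x, pi x *
              (⨆ t : ℕ, ((t : ℝ) + 1) ^ 2 *
                |((lazyM P ^ (t + 1)) *ᵥ f) x - ((lazyM P ^ t) *ᵥ f) x| ^ 2) ≤
            C * ∑ x, pi x * (f x - ∑ y, pi y * f y) ^ 2 := by
  refine ⟨4, by norm_num, fun Ω _ _ P pi hM f ↦ ?_⟩
  obtain ⟨⟨hP, -, ⟨hpi, -⟩, -⟩, hrev⟩ := hM
  exact maximal_inequality_lazy_general hP hpi hrev f _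
end
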